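/- arXiv:2402.10451 — 3 statements merged into one kernel-verified Lean document; each statement's English description precedes it below -/
import Mathlib

section
/- Let f₁,…,f_n be monotone non-identical linear functions that are neither colinear nor potentially identical, and let σ be a counterclockwise permutation of [n]. If β(f^{σ_k}) = β(f^{σ_{k+1}}) for some k∈{0,…,n−1} (indices of shifts mod n), then exactly one of the following holds: (i) σ_k and σ_{k+1} are minimum among all shifts of σ (β(f^{σ_k}) = min_{0≤i<n} β(f^{σ_i})) and θ(f_{σ(k+1)})+π ≡_{2π} θ(f^{σ_k}); (ii) σ_k and σ_{k+1} are maximum among all shifts of σ (β(f^{σ_k}) = max_{0≤i<n} β(f^{σ_i})) and θ(f_{σ(k+1)}) ≡_{2π} θ(f^{σ_k}). In particular the cyclic sequence (f^{σ_0},…,f^{σ_{n−1}}) is strictly unimodal: it is cyclically unimodal and any two consecutive equal values attain the minimum or the maximum. -/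
/-- A linear function `x ↦ a*x + b`. -/
structure LinFun where
  a : ℝ
  b : ℝ

namespace LinFun

/-- Evaluation of a linear function. -/
def eval (f : LinFun) (x : ℝ) : ℝ := f.a * x + f.b

/-- Composition: `h.comp g` is the linear function `x ↦ h (g x)`. -/
def comp (h g : LinFun) : LinFun := ⟨h.a * g.a, h.a * g.b + h.b⟩

/-- The identical linear function `x ↦ x`. -/
def idf : LinFun := ⟨1, 0⟩

/-- `f` is the identical function (equivalently, its vector `(β f, 1 - α f)` is `(0,0)`,
i.e. its angle is `⊥`). -/
def IsId (f : LinFun) : Prop := f = idf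

/-- The Euclidean norm of the vector `(β f, 1 - α f)` associated to `f`. -/
noncomputable def vecNorm (f : LinFun) : ℝ := Real.sqrt (f.b ^ 2 + (1 - f.a) ^ 2)

/-- The polar angle in `[0, 2π)` of the vector `(β f, 1 - α f)` associated to `f`
(meaningful only when `f` is not identical). -/
noncomputable def theta (f : LinFun) : ℝ :=
  if 0 ≤ Complex.arg ⟨f.b, 1 - f.a⟩ then Complex.arg ⟨f.b, 1 - f.a⟩
  else Complex.arg ⟨f.b, 1 - f.a⟩ + 2 * Real.pi

end LinFun

/-- Congruence of angles modulo `2π`: `x ≡_{2π} y`. -/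
def Cong (x y : ℝ) : Prop := ∃ k : ℤ, x - y = 2 * Real.pi * k

/-- The set `[t1, t2]_{2π}`. -/
def Icc2pi (t1 t2 : ℝ) : Set ℝ :=
  {θ | ∃ l1 l2 : ℝ, Cong l1 t1 ∧ Cong l2 t2 ∧ 0 ≤ l2 - l1 ∧ l2 - l1 < 2 * Real.pi ∧
    θ ∈ Set.Icc l1 l2}

/-- The set `(t1, t2)_{2π}`. -/
def Ioo2pi (t1 t2 : ℝ) : Set ℝ :=
  {θ | ∃ l1 l2 : ℝ, Cong l1 t1 ∧ Cong l2 t2 ∧ 0 ≤ l2 - l1 ∧ l2 - l1 < 2 * Real.pi ∧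
    θ ∈ Set.Ioo l1 l2}

/-- Composite of a list of linear functions: `compList [g₁, …, g_m] = g_m ∘ ⋯ ∘ g₁`. -/
def compList (L : List LinFun) : LinFun := L.foldl (fun acc g => g.comp acc) LinFun.idf

/-- The list `f_{σ(1)}, …, f_{σ(n)}` (0-indexed positions). -/
def permList {n : ℕ} (f : Fin n → LinFun) (σ : Equiv.Perm (Fin n)) : List LinFun :=
  List.ofFn fun i => f (σ i)

/-- `f^σ = f_{σ(n)} ∘ ⋯ ∘ f_{σ(1)}`. -/
def permComp {n : ℕ} (f : Fin n → LinFun) (σ : Equiv.Perm (Fin n)) : LinFun :=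
  compList (permList f σ)

/-- The composite of the functions at the (0-indexed) positions `a, a+1, …, b` of `σ`:
`f_{σ(b)} ∘ ⋯ ∘ f_{σ(a)}` (in 0-indexed notation). -/
def segComp {n : ℕ} (f : Fin n → LinFun) (σ : Equiv.Perm (Fin n)) (a b : ℕ) : LinFun :=
  compList (((permList f σ).drop a).take (b + 1 - a))

/-- The composite corresponding to the `k`-shift `σ_k` of `σ`:
`f^{σ_k} = f_{σ(k)} ∘ ⋯ ∘ f_{σ(1)} ∘ f_{σ(n)} ∘ ⋯ ∘ f_{σ(k+1)}` (1-indexed notation). -/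
def shiftComp {n : ℕ} (f : Fin n → LinFun) (σ : Equiv.Perm (Fin n)) (k : ℕ) : LinFun :=
  compList ((permList f σ).rotate k)

/-- `σ` is a minimum (optimal) permutation for `f₁, …, f_n`. -/
def IsMinimum {n : ℕ} (f : Fin n → LinFun) (σ : Equiv.Perm (Fin n)) : Prop :=
  ∀ ρ : Equiv.Perm (Fin n), (permComp f σ).b ≤ (permComp f ρ).b

/-- `μ` belongs to the neighbourhood `N(σ)`: it is obtained from `σ` by swapping two
adjacent blocks of positions, `(l, …, m)` and `(m+1, …, r)` (0-indexed, `l ≤ m < r < n`). -/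
def InNbhd {n : ℕ} (σ μ : Equiv.Perm (Fin n)) : Prop :=
  ∃ (l m r : ℕ) (_ : l ≤ m) (_ : m < r) (_ : r < n),
    (∀ i : Fin n, (i.val < l ∨ r < i.val) → μ i = σ i) ∧
    (∀ i : Fin n, ∀ _ : l ≤ i.val, ∀ _ : i.val < l + r - m,
      μ i = σ ⟨i.val + m + 1 - l, by omega⟩) ∧
    (∀ i : Fin n, ∀ _ : l + r - m ≤ i.val, ∀ _ : i.val ≤ r,
      μ i = σ ⟨i.val + m - r, by omega⟩)

/-- `σ` is locally optimal for `f₁, …, f_n`. -/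
def LocallyOptimal {n : ℕ} (f : Fin n → LinFun) (σ : Equiv.Perm (Fin n)) : Prop :=
  ∀ μ : Equiv.Perm (Fin n), InNbhd σ μ → (permComp f σ).b ≤ (permComp f μ).b

/-- `σ` is counterclockwise: ignoring the identical functions, some rotation of the sequence
of angles `θ(f_{σ(1)}), …, θ(f_{σ(n)})` is nondecreasing. -/
def Counterclockwise {n : ℕ} (f : Fin n → LinFun) (σ : Equiv.Perm (Fin n)) : Prop :=
  ∃ c : ℕ, ∀ i j : Fin n, ¬ (f (σ i)).IsId → ¬ (f (σ j)).IsId →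
    ((c ≤ i.val ∧ i ≤ j) ∨ (i ≤ j ∧ j.val < c) ∨ (c ≤ i.val ∧ j.val < c)) →
    (f (σ i)).theta ≤ (f (σ j)).theta

/-- `f₁, …, f_n` are colinear: all vectors lie on one line through the origin. -/
def Colinear {n : ℕ} (f : Fin n → LinFun) : Prop :=
  ∃ lam : ℝ, ∀ i : Fin n,
    (f i).IsId ∨ Cong ((f i).theta) lam ∨ Cong ((f i).theta) (lam + Real.pi)

/-- `f₁, …, f_n` are potentially identical: some counterclockwise permutation composes
to the identical function. -/
def PotentiallyIdentical {n : ℕ} (f : Fin n → LinFun) : Prop :=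
  ∃ σ : Equiv.Perm (Fin n), Counterclockwise f σ ∧ (permComp f σ).IsId

/-- The ε-perturbation `f^{(ε)}` of a linear function. -/
noncomputable def epsPert (f : LinFun) (ε : ℝ) : LinFun := if f.a = 0 then ⟨ε, f.b⟩ else f

section helpers13
open Real

lemma keyP (x y c : ℝ) (m : ℤ) (hc : 0 < c) (h : Real.sin y = c * Real.sin x)
    (hd : |x - y| < π) (hx : m * π ≤ x) : m * π ≤ y := by
  by_contra hy
  push Not at hy
  rw [abs_lt] at hd
  have e : Real.sin (y - m * π) = c * Real.sin (x - m * π) := by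
    rw [Real.sin_sub_int_mul_pi, Real.sin_sub_int_mul_pi, h]; ring
  have h1 : Real.sin (y - m * π) < 0 := Real.sin_neg_of_neg_of_neg_pi_lt (by linarith) (by linarith)
  have h2 : 0 ≤ Real.sin (x - m * π) := Real.sin_nonneg_of_nonneg_of_le_pi (by linarith) (by linarith)
  nlinarith

lemma keyQ (x y c : ℝ) (m : ℤ) (hc : 0 < c) (h : Real.sin y = c * Real.sin x)
    (hd : |x - y| < π) (hy : y ≤ m * π) : x ≤ m * π := by
  have := keyP (-y) (-x) c⁻¹ (-m) (inv_pos.mpr hc)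
    (by rw [Real.sin_neg, Real.sin_neg, h]; field_simp) (by convert hd using 2; ring)
    (by push_cast; linarith)
  push_cast at this; linarith

/-- sign of sine on even intervals -/
lemma sin_even (x : ℝ) (m : ℤ) (hm : Even m) (h1 : m * π ≤ x) (h2 : x ≤ (m + 1) * π) :
    0 ≤ Real.sin x := by
  have := Real.sin_nonneg_of_nonneg_of_le_pi (x := x - m * π) (by linarith) (by linarith)
  rwa [Real.sin_sub_int_mul_pi, hm.neg_one_zpow, one_mul] at this

lemma sin_odd (x : ℝ) (m : ℤ) (hm : Odd m) (h1 : m * π ≤ x) (h2 : x ≤ (m + 1) * π) :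
    Real.sin x ≤ 0 := by
  have := Real.sin_nonneg_of_nonneg_of_le_pi (x := x - m * π) (by linarith) (by linarith)
  rw [Real.sin_sub_int_mul_pi, hm.neg_one_zpow] at this
  linarith

structure Setup13 (n : ℕ) (B T p w c : ℕ → ℝ) : Prop where
  w_pos : ∀ k, 0 < w k
  c_pos : ∀ k, 0 < c k
  h1 : ∀ k, B (k + 1) - B k = -(w k * Real.sin (T k - p k))
  h2 : ∀ k, Real.sin (T k - p (k + 1)) = c k * Real.sin (T k - p k)
  h3 : ∀ k, |p (k + 1) - p k| < π
  h4 : ∀ k, T k ≤ T (k + 1)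
  hT : ∀ k, T (k + n) = T k + 2 * π
  hp : ∀ k, p (k + n) = p k
  hB : ∀ k, B (k + n) = B k

namespace Setup13
variable {n : ℕ} {B T p w c : ℕ → ℝ}

lemma P (S : Setup13 n B T p w c) (m : ℤ) {i j : ℕ} (hij : i ≤ j)
    (h : m * π ≤ T i - p i) : m * π ≤ T j - p j := by
  induction j, hij using Nat.le_induction with
  | base => exact h
  | succ k _ ih =>
    have := keyP (T k - p k) (T k - p (k + 1)) (c k) m (S.c_pos k) (S.h2 k)
      (by convert S.h3 k using 2; ring) ih
    linarith [S.h4 k]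

lemma Q (S : Setup13 n B T p w c) (m : ℤ) {i j : ℕ} (hij : i ≤ j)
    (h : T j - p j ≤ m * π) : T i - p i ≤ m * π := by
  induction j, hij using Nat.le_induction with
  | base => exact h
  | succ k _ ih =>
    apply ih
    exact keyQ (T k - p k) (T k - p (k + 1)) (c k) m (S.c_pos k) (S.h2 k)
      (by convert S.h3 k using 2; ring) (by linarith [S.h4 k])

lemma per (S : Setup13 n B T p w c) (k : ℕ) : T (k + n) - p (k + n) = T k - p k + 2 * π := by
  rw [S.hT, S.hp]; ring

lemma down (S : Setup13 n B T p w c) (m : ℤ) (hm : Even m) (k : ℕ) (h1 : m * π ≤ T k - p k)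
    (h2 : T k - p k ≤ (m + 1) * π) : B (k + 1) ≤ B k := by
  have := mul_nonneg (S.w_pos k).le (sin_even _ m hm h1 h2)
  linarith [S.h1 k]

lemma up (S : Setup13 n B T p w c) (m : ℤ) (hm : Odd m) (k : ℕ) (h1 : m * π ≤ T k - p k)
    (h2 : T k - p k ≤ (m + 1) * π) : B k ≤ B (k + 1) := by
  have := mul_nonneg (S.w_pos k).le (neg_nonneg.mpr (sin_odd _ m hm h1 h2))
  linarith [S.h1 k]

lemma chain_down (a b : ℕ) (hab : a ≤ b) (h : ∀ i, a ≤ i → i < b → B (i + 1) ≤ B i) :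
    B b ≤ B a := by
  induction b, hab using Nat.le_induction with
  | base => exact le_rfl
  | succ k hk ih =>
    exact (h k hk (by omega)).trans (ih fun i h1 h2 => h i h1 (by omega))

lemma chain_up (a b : ℕ) (hab : a ≤ b) (h : ∀ i, a ≤ i → i < b → B i ≤ B (i + 1)) :
    B a ≤ B b := by
  induction b, hab using Nat.le_induction with
  | base => exact le_rfl
  | succ k hk ih =>
    exact (ih fun i h1 h2 => h i h1 (by omega)).trans (h k hk (by omega))

lemma unimodal (S : Setup13 n B T p w c) : ∃ k m : ℕ, m ≤ n ∧
    (∀ i, i < m → B (k + i) ≤ B (k + i + 1)) ∧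
    (∀ i, m ≤ i → i < n → B (k + i + 1) ≤ B (k + i)) := by
  classical
  have hπ := Real.pi_pos
  obtain ⟨N, hN⟩ := exists_nat_gt ((T 0 - p 0) / π)
  rw [div_lt_iff₀ hπ] at hN
  set m : ℤ := 2 * N + 1 with hm
  have hmo : Odd m := ⟨N, rfl⟩
  have hm0 : T 0 - p 0 < m * π := by rw [hm]; push_cast; nlinarith [(Nat.cast_nonneg N : (0:ℝ) ≤ N)]
  have hiter : ∀ t : ℕ, T (t * n) - p (t * n) = T 0 - p 0 + t * (2 * π) := by
    intro t
    induction t with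
    | zero => simp
    | succ t ih => rw [Nat.succ_mul, S.per, ih]; push_cast; ring
  have hex : ∃ k, m * π ≤ T k - p k := by
    obtain ⟨t, ht⟩ := exists_nat_gt ((m * π - (T 0 - p 0)) / (2 * π))
    rw [div_lt_iff₀ (by positivity)] at ht
    exact ⟨t * n, by rw [hiter]; linarith⟩
  have hk := Nat.find_spec hex
  have hmin := fun j => Nat.find_min hex (m := j)
  set k := Nat.find hex
  have hk0 : k ≠ 0 := by
    intro h; rw [h] at hk; linarith
  obtain ⟨k', hk'⟩ := Nat.exists_eq_succ_of_ne_zero hk0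
  have hlt := hmin k' (by omega)
  push Not at hlt
  have hub : ∀ i, i < n → T (k + i) - p (k + i) ≤ (m + 2 : ℤ) * π := by
    intro i hi
    apply S.Q (m + 2) (j := k' + n) (by omega)
    rw [S.per]; push_cast; linarith
  have hlb : ∀ i, m * π ≤ T (k + i) - p (k + i) := fun i => S.P m (by omega) hk
  have hex2 : ∃ j, (m + 1 : ℤ) * π ≤ T (k + j) - p (k + j) :=
    ⟨n, by rw [S.per]; push_cast; linarith⟩
  refine ⟨k, Nat.find hex2, Nat.find_min' hex2 (by rw [S.per]; push_cast; linarith), ?_, ?_⟩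
  · intro i hi
    have h := Nat.find_min hex2 hi
    push Not at h
    push_cast at h
    exact S.up m hmo _ (hlb i) h.le
  · intro i hi hin
    have h := S.P (m + 1) (show k + Nat.find hex2 ≤ k + i by omega) (Nat.find_spec hex2)
    have h' := hub i hin
    push_cast at h'
    exact S.down (m + 1) hmo.add_one _ h (by push_cast; linarith)

lemma ismax (S : Setup13 n B T p w c) (m : ℤ) (hm : Even m) (k : ℕ) (hk : k ≤ n)
    (h : T k - p k = m * π) (i : ℕ) (hi : i < n) : B i ≤ B k := by
  have main : ∀ j, k ≤ j → j ≤ k + n → B j ≤ B k := by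
    intro j h1 h2
    rcases le_total (T j - p j) ((m + 1 : ℤ) * π) with hj | hj
    · apply chain_down _ _ h1
      intro i hi1 hi2
      have := S.Q (m + 1) hi2.le hj
      push_cast at this
      exact S.down m hm i (S.P m hi1 h.ge) this
    · rw [← S.hB k]
      apply chain_up _ _ h2
      intro i hi1 hi2
      have := S.Q (m + 2) hi2.le (by rw [S.per]; push_cast; linarith)
      push_cast at this
      exact S.up (m + 1) hm.add_one i (S.P (m + 1) hi1 hj) (by push_cast; linarith)
  rcases le_total k i with hki | hki
  · exact main i hki (by omega)
  · rw [← S.hB i]; exact main _ (by omega) (by omega)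

lemma ismin (S : Setup13 n B T p w c) (m : ℤ) (hm : Odd m) (k : ℕ) (hk : k ≤ n)
    (h : T k - p k = m * π) (i : ℕ) (hi : i < n) : B k ≤ B i := by
  have main : ∀ j, k ≤ j → j ≤ k + n → B k ≤ B j := by
    intro j h1 h2
    rcases le_total (T j - p j) ((m + 1 : ℤ) * π) with hj | hj
    · apply chain_up _ _ h1
      intro i hi1 hi2
      have := S.Q (m + 1) hi2.le hj
      push_cast at this
      exact S.up m hm i (S.P m hi1 h.ge) this
    · rw [← S.hB k]
      apply chain_down _ _ h2
      intro i hi1 hi2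
      have := S.Q (m + 2) hi2.le (by rw [S.per]; push_cast; linarith)
      push_cast at this
      exact S.down (m + 1) hm.add_one i (S.P (m + 1) hi1 hj) (by push_cast; linarith)
  rcases le_total k i with hki | hki
  · exact main i hki (by omega)
  · rw [← S.hB i]; exact main _ (by omega) (by omega)

end Setup13

lemma theta_nonneg13 (g : LinFun) : 0 ≤ g.theta := by
  unfold LinFun.theta
  split_ifs with h
  · exact h
  · linarith [Complex.neg_pi_lt_arg ⟨g.b, 1 - g.a⟩, Real.pi_pos]

lemma theta_lt13 (g : LinFun) : g.theta < 2 * π := by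
  unfold LinFun.theta
  split_ifs with h
  · linarith [Complex.arg_le_pi ⟨g.b, 1 - g.a⟩, Real.pi_pos]
  · linarith

lemma polar13 (g : LinFun) (hg : ¬ g.IsId) : ∃ r : ℝ, 0 < r ∧ g.b = r * Real.cos g.theta ∧
    1 - g.a = r * Real.sin g.theta := by
  set z : ℂ := ⟨g.b, 1 - g.a⟩ with hz
  have hz0 : z ≠ 0 := by
    intro h
    apply hg
    have h1 := congrArg Complex.re h
    have h2 := congrArg Complex.im h
    simp [hz] at h1 h2
    cases g
    simp only [LinFun.IsId, LinFun.idf, LinFun.mk.injEq] at *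
    exact ⟨by linarith, h1⟩
  have hc : Real.cos g.theta = Real.cos z.arg := by
    unfold LinFun.theta; split_ifs <;> simp [← hz]
  have hs : Real.sin g.theta = Real.sin z.arg := by
    unfold LinFun.theta; split_ifs <;> simp [← hz]
  refine ⟨‖z‖, norm_pos_iff.mpr hz0, ?_, ?_⟩
  · rw [hc, Complex.norm_mul_cos_arg]
  · rw [hs, Complex.norm_mul_sin_arg]

lemma compList_snoc13 (l : List LinFun) (x : LinFun) :
    compList (l ++ [x]) = x.comp (compList l) := by
  simp [compList]

lemma compList_cons13 (l : List LinFun) (x : LinFun) :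
    compList (x :: l) = (compList l).comp x := by
  induction l using List.reverseRecOn with
  | nil => simp [compList, LinFun.comp, LinFun.idf]
  | append_singleton l y ih =>
    rw [← List.cons_append, compList_snoc13, ih, compList_snoc13]
    simp only [LinFun.comp, LinFun.mk.injEq]
    constructor <;> ring

lemma shift_succ13 {n : ℕ} (f : Fin n → LinFun) (σ : Equiv.Perm (Fin n)) (hn : 0 < n) (k : ℕ) :
    ∃ G : LinFun, shiftComp f σ k = G.comp (f (σ ⟨k % n, Nat.mod_lt _ hn⟩)) ∧
      shiftComp f σ (k + 1) = (f (σ ⟨k % n, Nat.mod_lt _ hn⟩)).comp G := by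
  unfold shiftComp
  set L := permList f σ with hL
  have hlen : L.length = n := by simp [hL, permList]
  have hrl : (L.rotate k).length = n := by simp [hlen]
  have hhead : (L.rotate k)[0]'(by omega) = f (σ ⟨k % n, Nat.mod_lt _ hn⟩) := by
    rw [List.getElem_rotate]
    simp [hL, permList]
  have h1 : L.rotate (k + 1) = (L.rotate k).rotate 1 := by rw [List.rotate_rotate]
  rw [h1]
  cases hM : L.rotate k with
  | nil => rw [hM] at hrl; simp at hrl; omega
  | cons x l =>
    simp only [hM, List.getElem_cons_zero] at hhead
    subst hhead
    refine ⟨compList l, compList_cons13 _ _, ?_⟩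
    simp [compList_snoc13]

lemma angle_close13 (x y R R' s : ℝ) (hR : 0 < R) (hR' : 0 < R') (hx : 0 ≤ x) (hx' : x < 2 * π)
    (hy : 0 ≤ y) (hy' : y < 2 * π) (h : s = R * Real.sin x) (h' : s = R' * Real.sin y)
    (hc : s = 0 → ∃ q, 0 < q ∧ R' * Real.cos y = q * (R * Real.cos x)) : |y - x| < π := by
  have hπ := Real.pi_pos
  have pos : ∀ z, 0 ≤ z → z < 2 * π → 0 < Real.sin z → 0 < z ∧ z < π := by
    intro z h0 h1 hs
    constructor
    · rcases h0.lt_or_eq with h | h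
      · exact h
      · rw [← h] at hs; simp at hs
    · by_contra hh
      push Not at hh
      have := Real.sin_nonneg_of_nonneg_of_le_pi (x := z - π) (by linarith) (by linarith)
      rw [Real.sin_sub_pi] at this; linarith
  have neg : ∀ z, 0 ≤ z → z < 2 * π → Real.sin z < 0 → π < z ∧ z < 2 * π := by
    intro z h0 h1 hs
    refine ⟨?_, h1⟩
    by_contra hh
    push Not at hh
    have := Real.sin_nonneg_of_nonneg_of_le_pi h0 hh
    linarith
  have zero : ∀ z, 0 ≤ z → z < 2 * π → Real.sin z = 0 → z = 0 ∨ z = π := by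
    intro z h0 h1 hs
    rcases lt_trichotomy z π with h | h | h
    · left
      exact (Real.sin_eq_zero_iff_of_lt_of_lt (by linarith) h).mp hs
    · exact Or.inr h
    · have := (Real.sin_eq_zero_iff_of_lt_of_lt (x := z - π) (by linarith) (by linarith)).mp
        (by rw [Real.sin_sub_pi, hs, neg_zero])
      linarith
  rw [abs_lt]
  rcases lt_trichotomy s 0 with hs | hs | hs
  · have a := neg x hx hx' (by by_contra hh; push Not at hh; nlinarith)
    have b := neg y hy hy' (by by_contra hh; push Not at hh; nlinarith)
    constructor <;> linarith
  · have a := zero x hx hx' (by rw [hs] at h; rcases mul_eq_zero.mp h.symm with h | h <;> [linarith; exact h])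
    have b := zero y hy hy' (by rw [hs] at h'; rcases mul_eq_zero.mp h'.symm with h | h <;> [linarith; exact h])
    obtain ⟨q, hq, hqq⟩ := hc hs
    have hqR := mul_pos hq hR
    rcases a with a | a <;> rcases b with b | b <;> subst a <;> subst b <;> simp at hqq ⊢
    · exact hπ
    · linarith
    · linarith
    · exact hπ
  · have a := pos x hx hx' (by by_contra hh; push Not at hh; nlinarith)
    have b := pos y hy hy' (by by_contra hh; push Not at hh; nlinarith)
    constructor <;> linarith

end helpers13

lemma lift13 {n : ℕ} (hn : 0 < n) (θ : Fin n → ℝ) (h0 : ∀ i, 0 ≤ θ i) (h1 : ∀ i, θ i < 2 * Real.pi)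
    (c : ℕ) (h : ∀ i j : Fin n, ((c ≤ i.val ∧ i ≤ j) ∨ (i ≤ j ∧ j.val < c) ∨ (c ≤ i.val ∧ j.val < c)) →
      θ i ≤ θ j) : ∃ T : ℕ → ℝ, (∀ k, T k ≤ T (k + 1)) ∧ (∀ k, T (k + n) = T k + 2 * Real.pi) ∧
      ∀ k, ∃ z : ℤ, T k = θ ⟨k % n, Nat.mod_lt _ hn⟩ + z * (2 * Real.pi) := by
  have hπ := Real.pi_pos
  refine ⟨fun k => θ ⟨k % n, Nat.mod_lt _ hn⟩ +
    (((if c ≤ k % n then 1 else 0) + (k / n : ℕ) : ℤ) : ℝ) * (2 * Real.pi), ?_, ?_, fun k => ⟨_, rfl⟩⟩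
  · intro k
    dsimp only
    have hk : n * (k / n) + k % n = k := Nat.div_add_mod k n
    have hlt := Nat.mod_lt k hn
    obtain ⟨q, hq⟩ : ∃ q, q = k / n := ⟨_, rfl⟩
    obtain ⟨r, hr⟩ : ∃ r, r = k % n := ⟨_, rfl⟩
    simp only [← hq, ← hr] at hk hlt ⊢
    rcases Nat.lt_or_ge (r + 1) n with hr1 | hr1
    · have e1 : (k + 1) % n = r + 1 := by
        rw [← hk, add_assoc, Nat.mul_add_mod, Nat.mod_eq_of_lt hr1]
      have e2 : (k + 1) / n = q := by
        rw [← hk, add_assoc, Nat.mul_add_div hn, Nat.div_eq_of_lt hr1, add_zero]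
      simp only [e1, e2]
      have b1 := h0 ⟨r + 1, hr1⟩
      have b2 := h1 ⟨r, hlt⟩
      have hh := h ⟨r, hlt⟩ ⟨r + 1, hr1⟩
      simp only [Fin.mk_le_mk] at hh
      split_ifs with c1 c2 c2
      · have := hh (by omega); push_cast; linarith
      · omega
      · push_cast; linarith
      · have := hh (by omega); push_cast; linarith
    · have hrn : r + 1 = n := by omega
      have e1 : (k + 1) % n = 0 := by
        rw [← hk, add_assoc, Nat.mul_add_mod, hrn, Nat.mod_self]
      have e2 : (k + 1) / n = q + 1 := by
        rw [← hk, add_assoc, Nat.mul_add_div hn, hrn, Nat.div_self hn]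
      simp only [e1, e2]
      have b1 := h0 ⟨0, hn⟩
      have b2 := h1 ⟨r, hlt⟩
      have hh := h ⟨r, hlt⟩ ⟨0, hn⟩
      split_ifs with c1 c2 c2
      · push_cast; linarith
      · have := hh (by simp only [Fin.mk_le_mk]; omega); push_cast; linarith
      · push_cast; linarith
      · push_cast; linarith
  · intro k
    simp only [Nat.add_mod_right, Nat.add_div_right _ hn]
    push_cast
    ring

/-- strict unimodality of the shifts of a counterclockwise permutation.
`shiftComp f σ k` is `f^{σ_k}` (shift indices read modulo `n`), and `f (σ ⟨k, _⟩)` is the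
1-indexed `f_{σ(k+1)}`. -/
theorem stmt13 {n : ℕ} (f : Fin n → LinFun) (hf : ∀ i, 0 < (f i).a)
    (hni : ∀ i, ¬ (f i).IsId) (hnc : ¬ Colinear f) (hnp : ¬ PotentiallyIdentical f)
    (σ : Equiv.Perm (Fin n)) (hccw : Counterclockwise f σ) :
    (∀ k : ℕ, ∀ hk : k < n,
      (shiftComp f σ k).b = (shiftComp f σ (k + 1)).b →
      Xor'
        ((∀ i : ℕ, i < n → (shiftComp f σ k).b ≤ (shiftComp f σ i).b) ∧
          Cong ((f (σ ⟨k, hk⟩)).theta + Real.pi) ((shiftComp f σ k).theta))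
        ((∀ i : ℕ, i < n → (shiftComp f σ i).b ≤ (shiftComp f σ k).b) ∧
          Cong ((f (σ ⟨k, hk⟩)).theta) ((shiftComp f σ k).theta))) ∧
    (∃ k m : ℕ, m ≤ n ∧
      (∀ i : ℕ, i < m →
        (shiftComp f σ (k + i)).b ≤ (shiftComp f σ (k + i + 1)).b) ∧
      (∀ i : ℕ, m ≤ i → i < n →
        (shiftComp f σ (k + i + 1)).b ≤ (shiftComp f σ (k + i)).b)) := by
  
  have hn : 0 < n := by
    rcases Nat.eq_zero_or_pos n with h | h
    · subst h
      exact absurd ⟨0, fun i => i.elim0⟩ hnc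
    · exact h
  have hπ := Real.pi_pos
  obtain ⟨c, hc⟩ := hccw
  obtain ⟨T, hT1, hT2, hT3⟩ := lift13 hn (fun i => (f (σ i)).theta) (fun i => theta_nonneg13 _)
    (fun i => theta_lt13 _) c (fun i j => hc i j (hni _) (hni _))
  set F : ℕ → LinFun := fun k => shiftComp f σ k with hF
  set g : ℕ → LinFun := fun k => f (σ ⟨k % n, Nat.mod_lt _ hn⟩) with hg
  have hstep : ∀ k, (F (k + 1)).a = (F k).a ∧
      (F (k + 1)).b = (g k).a * (F k).b + (g k).b * (1 - (F k).a) := by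
    intro k
    obtain ⟨G, h1, h2⟩ := shift_succ13 f σ hn k
    simp only [hF, hg, h1, h2, LinFun.comp]
    constructor <;> ring
  have hga : ∀ k, 0 < (g k).a := fun k => hf _
  have hnid : ∀ k, ¬ (F k).IsId := by
    intro k
    induction k with
    | zero =>
      intro h
      refine hnp ⟨σ, ⟨c, hc⟩, ?_⟩
      simpa [hF, shiftComp, permComp] using h
    | succ k ih =>
      intro h
      apply ih
      obtain ⟨h1, h2⟩ := hstep k
      rw [LinFun.IsId] at h
      rw [h] at h1 h2
      simp only [LinFun.idf] at h1 h2
      rw [← h1] at h2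
      have h3 : (F k).b = 0 := by
        have : (g k).a * (F k).b = 0 := by linarith
        rcases mul_eq_zero.mp this with h | h
        · linarith [hga k]
        · exact h
      have : F k = ⟨(F k).a, (F k).b⟩ := rfl
      rw [LinFun.IsId, this, ← h1, h3]; rfl
  choose R hR hRb hRa using fun k => polar13 (F k) (hnid k)
  choose r hr hrb hra using fun k => polar13 (g k) (hni _)
  have hTs : ∀ k x, Real.sin (T k - x) = Real.sin ((g k).theta - x) := by
    intro k x
    obtain ⟨z, hz⟩ := hT3 k
    rw [hz, show (f (σ ⟨k % n, Nat.mod_lt _ hn⟩)).theta + z * (2 * Real.pi) - x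
      = (g k).theta - x + z * (2 * Real.pi) by simp only [hg]; ring, Real.sin_add_int_mul_two_pi]
  have hper : ∀ k, F (k + n) = F k := by
    intro k
    simp only [hF, shiftComp]
    have hl : (permList f σ).length = n := by simp [permList]
    rw [← List.rotate_mod _ (k + n), ← List.rotate_mod _ k, hl, Nat.add_mod_right]
  have S : Setup13 n (fun k => (F k).b) T (fun k => (F k).theta) (fun k => r k * R k)
      (fun k => (g k).a * R k / R (k + 1)) := by
    refine ⟨fun k => mul_pos (hr k) (hR k), fun k => div_pos (mul_pos (hga k) (hR k)) (hR _),
      ?_, ?_, ?_, hT1, hT2, fun k => by simp only [hper], fun k => by simp only [hper]⟩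
    · intro k
      rw [hTs, Real.sin_sub, (hstep k).2]
      have e : (g k).a = 1 - r k * Real.sin (g k).theta := by linarith [hra k]
      rw [e, hRa k, hrb k, hRb k]
      ring
    · intro k
      rw [hTs, hTs]
      have key : r k * R (k + 1) * Real.sin ((g k).theta - (F (k + 1)).theta)
          = (g k).a * (r k * R k * Real.sin ((g k).theta - (F k).theta)) := by
        have e1 : r k * R (k + 1) * Real.sin ((g k).theta - (F (k + 1)).theta) =
            (1 - (g k).a) * (F (k + 1)).b - (g k).b * (1 - (F (k + 1)).a) := by
          rw [Real.sin_sub, hra k, hRb (k + 1), hrb k, hRa (k + 1)]; ring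
        have e2 : r k * R k * Real.sin ((g k).theta - (F k).theta) =
            (1 - (g k).a) * (F k).b - (g k).b * (1 - (F k).a) := by
          rw [Real.sin_sub, hra k, hRb k, hrb k, hRa k]; ring
        rw [e1, e2, (hstep k).1, (hstep k).2]; ring
      have h1 := (hr k).ne'
      have h2 := (hR (k + 1)).ne'
      rw [div_mul_eq_mul_div, eq_div_iff h2]
      apply mul_left_cancel₀ h1
      linarith
    · intro k
      apply angle_close13 _ _ (R k) (R (k + 1)) (1 - (F k).a) (hR _) (hR _) (theta_nonneg13 _)
        (theta_lt13 _) (theta_nonneg13 _) (theta_lt13 _) (hRa k) (by rw [← hRa (k + 1), (hstep k).1])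
        _
      intro h
      refine ⟨(g k).a, hga k, ?_⟩
      rw [← hRb, ← hRb, (hstep k).2, h]; ring
  refine ⟨?_, S.unimodal⟩
  intro k hk hkk
  have hgk : f (σ ⟨k, hk⟩) = g k := by simp only [hg, Nat.mod_eq_of_lt hk]
  obtain ⟨z, hz⟩ := hT3 k
  change T k = (g k).theta + _ at hz
  have hs : Real.sin (T k - (F k).theta) = 0 := by
    have h1 := S.h1 k
    have h2 : (F k).b = (F (k + 1)).b := hkk
    rw [h2, sub_self] at h1
    have h3 := mul_pos (hr k) (hR k)
    rcases mul_eq_zero.mp (neg_eq_zero.mp h1.symm) with h | h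
    · linarith
    · exact h
  obtain ⟨m, hm⟩ := Real.sin_eq_zero_iff.mp hs
  rw [hgk]
  change Xor' (_ ∧ Cong _ (F k).theta) (_ ∧ Cong _ (F k).theta)
  have hexcl : Cong ((g k).theta + Real.pi) (F k).theta → Cong ((g k).theta) (F k).theta → False := by
    rintro ⟨a, ha⟩ ⟨b, hb⟩
    have h1 : Real.pi * (2 * (a - b : ℤ) - 1 : ℤ) = 0 := by push_cast; linarith
    rcases mul_eq_zero.mp h1 with h | h
    · linarith
    · have : (2 * (a - b : ℤ) - 1 : ℤ) = 0 := by exact_mod_cast h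
      omega
  rcases Int.even_or_odd m with he | ho
  · have hcg : Cong ((g k).theta) (F k).theta := by
      obtain ⟨q, rfl⟩ := he
      refine ⟨q - z, ?_⟩
      push_cast at hm ⊢
      linarith
    exact Or.inr ⟨⟨fun i hi => S.ismax m he k hk.le hm.symm i hi, hcg⟩, fun h => hexcl h.2 hcg⟩
  · have hcg : Cong ((g k).theta + Real.pi) (F k).theta := by
      obtain ⟨q, rfl⟩ := ho
      refine ⟨q + 1 - z, ?_⟩
      push_cast at hm ⊢
      linarith
    exact Or.inl ⟨⟨fun i hi => S.ismin m ho k hk.le hm.symm i hi, hcg⟩, fun h => hexcl hcg h.2⟩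
end

section
/- Let f₁,…,f_n be monotone nondecreasing linear functions, at least one of which is a constant function, and suppose there exists i with θ(f_i) ∈ (θ(β_min), θ(β_min)+π) (equivalently, β_OPT < β_min). Then a permutation σ of [n] is optimal if and only if σ = μ∘ρ where μ is a counterclockwise permutation satisfying θ(f^μ)+π ∈ [θ(f_{μ(t)}), θ(f_{μ(s)})]_{2π} with s and t the first and last indices i such that f_{μ(i)} is non-identical, and ρ is a permutation with ρ(i)=i for every i with q_μ ≤ i ≤ n. -/
open LinFun

def ev (L : List LinFun) (x : ℝ) : ℝ := L.foldl (fun x g => g.eval x) x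

lemma ev_nil (x : ℝ) : ev [] x = x := rfl
lemma ev_cons (g : LinFun) (L : List LinFun) (x : ℝ) : ev (g :: L) x = ev L (g.eval x) := rfl
lemma ev_append (L M : List LinFun) (x : ℝ) : ev (L ++ M) x = ev M (ev L x) := by
  simp [ev, List.foldl_append]

lemma foldl_ev (L : List LinFun) (h : LinFun) (x : ℝ) :
    (L.foldl (fun acc g => g.comp acc) h).eval x = ev L (h.eval x) := by
  induction L generalizing h with
  | nil => rfl
  | cons g L ih =>
    rw [List.foldl_cons, ih, ev_cons]
    congr 1
    simp only [LinFun.eval, LinFun.comp]; ring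

lemma compList_ev (L : List LinFun) (x : ℝ) : (compList L).eval x = ev L x := by
  unfold compList
  rw [foldl_ev]; simp [LinFun.eval, LinFun.idf]

lemma compList_b (L : List LinFun) : (compList L).b = ev L 0 := by
  rw [← compList_ev]; simp [LinFun.eval]

lemma eval_const {k : LinFun} (h : k.a = 0) (x : ℝ) : k.eval x = k.b := by
  simp [LinFun.eval, h]

lemma ev_split {P S : List LinFun} {k : LinFun} (h : k.a = 0) (x : ℝ) :
    ev (P ++ k :: S) x = ev S k.b := by
  rw [ev_append, ev_cons, eval_const h]

lemma compList_split {P S : List LinFun} {k : LinFun} (h : k.a = 0) :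
    compList (P ++ k :: S) = ⟨0, ev S k.b⟩ := by
  have h0 := compList_ev (P ++ k :: S) 0
  have h1 := compList_ev (P ++ k :: S) 1
  rw [ev_split h] at h0 h1
  simp only [LinFun.eval] at h0 h1
  cases hh : compList (P ++ k :: S) with
  | mk a b =>
    rw [hh] at h0 h1
    simp only at h0 h1
    congr 1 <;> linarith

lemma ev_strict {S : List LinFun} (h : ∀ g ∈ S, 0 < g.a) {x y : ℝ} (hxy : x < y) :
    ev S x < ev S y := by
  induction S generalizing x y with
  | nil => exact hxy
  | cons g S ih =>
    rw [ev_cons, ev_cons]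
    apply ih (fun a ha => h a (by simp [ha]))
    have := h g (by simp)
    simp only [LinFun.eval]
    nlinarith

lemma ev_le_iff {S : List LinFun} (h : ∀ g ∈ S, 0 < g.a) {x y : ℝ} :
    ev S x ≤ ev S y ↔ x ≤ y := by
  have : StrictMono (ev S) := fun x y hxy => ev_strict h hxy
  exact this.le_iff_le

/-! angles -/

lemma theta_nonneg (f : LinFun) : 0 ≤ f.theta := by
  unfold LinFun.theta
  split_ifs with h
  · exact h
  · have := Complex.neg_pi_lt_arg ⟨f.b, 1 - f.a⟩
    linarith [Real.pi_pos]

lemma theta_lt (f : LinFun) : f.theta < 2 * Real.pi := by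
  unfold LinFun.theta
  split_ifs with h
  · have := Complex.arg_le_pi ⟨f.b, 1 - f.a⟩
    linarith [Real.pi_pos]
  · linarith

lemma theta_id {f : LinFun} (h : f.IsId) : f.theta = 0 := by
  rw [h]
  have : (⟨0, 1 - 1⟩ : ℂ) = 0 := by apply Complex.ext <;> simp
  simp only [LinFun.theta, LinFun.idf, this]; simp

lemma theta_polar {f : LinFun} (h : ¬ f.IsId) :
    ∃ r : ℝ, 0 < r ∧ f.b = r * Real.cos f.theta ∧ 1 - f.a = r * Real.sin f.theta := by
  set z : ℂ := ⟨f.b, 1 - f.a⟩ with hz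
  have hz0 : z ≠ 0 := by
    intro h0
    apply h
    have h1 := congrArg Complex.re h0
    have h2 := congrArg Complex.im h0
    simp [hz] at h1 h2
    cases f
    simp only [LinFun.IsId, LinFun.idf, LinFun.mk.injEq]
    simp at h1 h2
    constructor <;> linarith
  refine ⟨‖z‖, norm_pos_iff.mpr hz0, ?_, ?_⟩
  · have : Real.cos f.theta = Real.cos z.arg := by
      unfold LinFun.theta
      split_ifs with h
      · rfl
      · rw [Real.cos_add_two_pi]
    rw [this, Complex.norm_mul_cos_arg]
  · have : Real.sin f.theta = Real.sin z.arg := by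
      unfold LinFun.theta
      split_ifs with h
      · rfl
      · rw [Real.sin_add_two_pi]
    rw [this, Complex.norm_mul_sin_arg]

lemma sin_nonneg_iff' {x : ℝ} (h1 : -Real.pi < x) (h2 : x < 2 * Real.pi) :
    0 ≤ Real.sin x ↔ 0 ≤ x ∧ x ≤ Real.pi := by
  constructor
  · intro h
    constructor
    · by_contra! hc
      linarith [Real.sin_neg_of_neg_of_neg_pi_lt hc h1]
    · by_contra! hc
      have := Real.sin_pos_of_pos_of_lt_pi (x := x - Real.pi) (by linarith) (by linarith)
      rw [Real.sin_sub_pi] at this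
      linarith
  · rintro ⟨h, h'⟩
    exact Real.sin_nonneg_of_nonneg_of_le_pi h h'

lemma sin_nonpos_iff' {x : ℝ} (h1 : -Real.pi < x) (h2 : x < 2 * Real.pi) :
    Real.sin x ≤ 0 ↔ x ≤ 0 ∨ Real.pi ≤ x := by
  constructor
  · intro h
    by_contra! hc
    linarith [Real.sin_pos_of_pos_of_lt_pi hc.1 hc.2]
  · rintro (h | h)
    · exact Real.sin_nonpos_of_nonpos_of_neg_pi_le h h1.le
    · have := Real.sin_nonneg_of_nonneg_of_le_pi (x := x - Real.pi) (by linarith) (by linarith)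
      rw [Real.sin_sub_pi] at this
      linarith

noncomputable def T (c : ℝ) : ℝ := LinFun.theta ⟨0, c⟩

lemma const_not_id {k : LinFun} (h : k.a = 0) : ¬ k.IsId := by
  intro h'
  rw [h'] at h
  simp [LinFun.idf] at h

lemma T_spec (c : ℝ) : 0 < T c ∧ T c < Real.pi ∧
    ∃ r : ℝ, 0 < r ∧ c = r * Real.cos (T c) ∧ 1 = r * Real.sin (T c) := by
  obtain ⟨r, hr, h1, h2⟩ := theta_polar (f := ⟨0, c⟩) (const_not_id rfl)
  change c = r * Real.cos (T c) at h1
  change 1 - 0 = r * Real.sin (T c) at h2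
  have hs : 0 < Real.sin (T c) := by
    by_contra! hc
    nlinarith
  have h0 : 0 ≤ T c := theta_nonneg _
  have h3 : T c < 2 * Real.pi := theta_lt _
  have hp := Real.pi_pos
  have := mt (sin_nonpos_iff' (x := T c) (by linarith) h3).mpr (by linarith)
  push Not at this
  exact ⟨this.1, this.2, r, hr, h1, by linarith⟩

lemma T_pos (c : ℝ) : 0 < T c := (T_spec c).1
lemma T_lt (c : ℝ) : T c < Real.pi := (T_spec c).2.1

lemma T_le_iff {c d : ℝ} : T c ≤ T d ↔ d ≤ c := by
  obtain ⟨h1, h2, r, hr, h3, h4⟩ := T_spec c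
  obtain ⟨k1, k2, s, hs, k3, k4⟩ := T_spec d
  have key : c - d = (r * s) * Real.sin (T d - T c) := by
    rw [Real.sin_sub]
    linear_combination h3 - k3 + r * Real.cos (T c) * k4 - s * Real.cos (T d) * h4
  have hrs : 0 < r * s := by positivity
  rw [← sub_nonneg, ← sub_nonneg (a := c), key, mul_nonneg_iff_of_pos_left hrs,
    sin_nonneg_iff' (by linarith) (by linarith)]
  constructor
  · intro h; exact ⟨h, by linarith⟩
  · intro h; exact h.1

lemma T_lt_iff {c d : ℝ} : T c < T d ↔ d < c := by
  rw [← not_le, ← not_le, T_le_iff]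

lemma eval_sub {g : LinFun} (h : ¬ g.IsId) (c : ℝ) :
    ∃ m : ℝ, 0 < m ∧ c - g.eval c = m * Real.sin (g.theta - T c) := by
  obtain ⟨h1, h2, r, hr, h3, h4⟩ := T_spec c
  obtain ⟨s, hs, k3, k4⟩ := theta_polar h
  refine ⟨r * s, by positivity, ?_⟩
  rw [Real.sin_sub]
  simp only [LinFun.eval]
  linear_combination (1 - g.a) * h3 + r * Real.cos (T c) * k4 - k3 - s * Real.cos g.theta * h4

lemma eval_le_iff {g : LinFun} (h : ¬ g.IsId) (c : ℝ) :
    g.eval c ≤ c ↔ T c ≤ g.theta ∧ g.theta ≤ T c + Real.pi := by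
  obtain ⟨m, hm, e⟩ := eval_sub h c
  have := T_pos c
  have := T_lt c
  have := theta_nonneg g
  have := theta_lt g
  rw [← sub_nonneg, e, mul_nonneg_iff_of_pos_left hm, sin_nonneg_iff' (by linarith) (by linarith)]
  constructor <;> rintro ⟨_, _⟩ <;> constructor <;> linarith

lemma le_eval_iff {g : LinFun} (h : ¬ g.IsId) (c : ℝ) :
    c ≤ g.eval c ↔ g.theta ≤ T c ∨ T c + Real.pi ≤ g.theta := by
  obtain ⟨m, hm, e⟩ := eval_sub h c
  have := T_pos c
  have := T_lt c
  have := theta_nonneg g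
  have := theta_lt g
  rw [← sub_nonpos, e, mul_nonpos_iff_pos_imp_nonpos]
  have e2 : (0 < m → Real.sin (g.theta - T c) ≤ 0) ↔ Real.sin (g.theta - T c) ≤ 0 :=
    ⟨fun h => h hm, fun h _ => h⟩
  have e3 : (Real.sin (g.theta - T c) ≤ 0 ∨ False) ↔ Real.sin (g.theta - T c) ≤ 0 := by simp
  have e4 := sin_nonpos_iff' (x := g.theta - T c) (by linarith) (by linarith)
  have e5 : (g.theta - T c ≤ 0 ∨ Real.pi ≤ g.theta - T c) ↔ 
    (g.theta ≤ T c ∨ T c + Real.pi ≤ g.theta) := by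
    constructor <;> rintro (_ | _)
    · left; linarith
    · right; linarith
    · left; linarith
    · right; linarith
  rw [← e5, ← e4]
  constructor
  · intro h; exact h.1 hm
  · intro h; refine ⟨fun _ => h, fun h' => ?_⟩
    by_contra! hc
    linarith

lemma lt_eval_iff {g : LinFun} (h : ¬ g.IsId) (c : ℝ) :
    g.eval c < c ↔ T c < g.theta ∧ g.theta < T c + Real.pi := by
  rw [← not_le, le_eval_iff h]; push Not; rfl

lemma eval_id {g : LinFun} (h : g.IsId) (c : ℝ) : g.eval c = c := by
  rw [h]; simp [LinFun.eval, LinFun.idf]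

lemma cross_eq {g h : LinFun} (hg : ¬ g.IsId) (hh : ¬ h.IsId) (x : ℝ) :
    ∃ m : ℝ, 0 < m ∧ g.eval (h.eval x) - h.eval (g.eval x) = m * Real.sin (h.theta - g.theta) := by
  obtain ⟨r, hr, h3, h4⟩ := theta_polar hg
  obtain ⟨s, hs, k3, k4⟩ := theta_polar hh
  refine ⟨r * s, by positivity, ?_⟩
  rw [Real.sin_sub]
  simp only [LinFun.eval]
  linear_combination (1 - h.a) * h3 - (1 - g.a) * k3 + r * Real.cos g.theta * k4 -
    s * Real.cos h.theta * h4

lemma comm_of_eq {g h : LinFun} (hg : ¬ g.IsId) (hh : ¬ h.IsId) (e : g.theta = h.theta) (x : ℝ) :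
    g.eval (h.eval x) = h.eval (g.eval x) := by
  obtain ⟨m, _, h1⟩ := cross_eq hg hh x
  rw [e, sub_self, Real.sin_zero] at h1
  linarith

lemma exists_perm_of_perm {n : ℕ} (f : Fin n → LinFun) (σ : Equiv.Perm (Fin n)) (L : List LinFun)
    (h : L.Perm (permList f σ)) : ∃ τ : Equiv.Perm (Fin n), permList f τ = L := by
  have h1 : permList f σ = (List.ofFn σ).map f := by
    rw [List.map_ofFn]; rfl
  rw [h1] at h
  have h2 : ∃ l : List (Fin n), L = l.map f ∧ l.Perm (List.ofFn σ) := by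
    have this : (fun (a : List LinFun) (b : List (Fin n)) => a.Perm (b.map f)) L (List.ofFn σ) := h
    rw [← List.eq_map_comp_perm f] at this
    exact this
  obtain ⟨l, hl, hp⟩ := h2
  have hlen : l.length = n := by rw [hp.length_eq, List.length_ofFn]
  have hnd : l.Nodup := hp.nodup_iff.mpr (List.nodup_ofFn.mpr σ.injective)
  have hinj : Function.Injective (fun i : Fin n => l.get (i.cast hlen.symm)) := by
    intro i j hij
    have := hnd.injective_get hij
    simpa using this
  refine ⟨Equiv.ofBijective _ (Finite.injective_iff_bijective.mp hinj), ?_⟩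
  rw [hl]
  apply List.ext_getElem
  · simp [permList, hlen]
  · intro i h1 h2
    simp [permList]

lemma permList_perm {n : ℕ} (f : Fin n → LinFun) (σ τ : Equiv.Perm (Fin n)) :
    (permList f σ).Perm (permList f τ) :=
  (Equiv.Perm.ofFn_comp_perm σ f).trans (Equiv.Perm.ofFn_comp_perm τ f).symm

structure Good (bm v : ℝ) (P S : List LinFun) : Prop where
  pre : ∀ g ∈ P, ¬ g.IsId → g.theta ≤ T bm ∨ T v + Real.pi ≤ g.theta
  suf : ∀ g ∈ S, ¬ g.IsId → T bm ≤ g.theta ∧ g.theta ≤ T v + Real.pi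
  pos : ∀ g ∈ S, 0 < g.a
  srt : S.Pairwise (fun g h => ¬ g.IsId → ¬ h.IsId → g.theta ≤ h.theta)
  val : ev S bm = v

open Classical in
lemma ev_filter (S : List LinFun) (x : ℝ) : ev (S.filter (fun g => ¬ g.IsId)) x = ev S x := by
  induction S generalizing x with
  | nil => rfl
  | cons g S ih =>
    by_cases h : g.IsId
    · rw [List.filter_cons_of_neg (by simpa using h), ih, ev_cons, eval_id h]
    · rw [List.filter_cons_of_pos (by simpa using h), ev_cons, ih, ev_cons]

lemma ev_move {A : List LinFun} {g : LinFun} (h : ∀ a ∈ A, ∀ x, g.eval (a.eval x) = a.eval (g.eval x))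
    (x : ℝ) : g.eval (ev A x) = ev A (g.eval x) := by
  induction A generalizing x with
  | nil => rfl
  | cons a A ih =>
    rw [ev_cons, ih (fun b hb => h b (by simp [hb])), h a (by simp), ev_cons]

lemma ev_perm {L M : List LinFun} (hp : L.Perm M) (hn : ∀ g ∈ L, ¬ g.IsId)
    (hL : L.Pairwise (fun g h => g.theta ≤ h.theta))
    (hM : M.Pairwise (fun g h => g.theta ≤ h.theta)) (x : ℝ) : ev L x = ev M x := by
  induction L generalizing M x with
  | nil => rw [List.nil_perm.mp hp]
  | cons g L ih =>
    have hg : g ∈ M := hp.subset (by simp)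
    obtain ⟨A, B, rfl⟩ := List.append_of_mem hg
    have hp2 : L.Perm (A ++ B) := by
      have := hp.trans List.perm_middle
      exact List.perm_cons g |>.mp this
    have hM2 : (A ++ B).Pairwise (fun g h : LinFun => g.theta ≤ h.theta) := by
      refine hM.sublist ?_
      simp
    have := ih hp2 (fun a ha => hn a (by simp [ha])) (List.pairwise_cons.mp hL).2 hM2 (g.eval x)
    rw [ev_cons, this, ev_append, ev_append, ev_cons]
    rw [ev_move]
    intro a ha y
    apply comm_of_eq (hn g (by simp)) (hn a (hp.symm.subset (by simp [ha])))
    apply le_antisymm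
    · exact (List.pairwise_cons.mp hL).1 a (hp2.symm.subset (by simp [ha]))
    · exact (List.pairwise_append.mp hM).2.2 a ha g (by simp)

open Classical in
lemma split_sorted {S : List LinFun} (p : LinFun → Prop)
    (hp : ∀ g h : LinFun, g.theta ≤ h.theta → p h → p g)
    (hS : S.Pairwise (fun g h => g.theta ≤ h.theta)) :
    S = S.filter (fun g => p g) ++ S.filter (fun g => ¬ p g) := by
  induction S with
  | nil => rfl
  | cons g S ih =>
    rw [List.pairwise_cons] at hS
    by_cases h : p g
    · rw [List.filter_cons_of_pos (by simpa using h), List.filter_cons_of_neg (by simpa using h),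
        List.cons_append, ← ih hS.2]
    · have h2 : (g :: S).filter (fun g => p g) = [] := by
        rw [List.filter_eq_nil_iff]
        intro a ha
        simp only [List.mem_cons] at ha
        rcases ha with rfl | ha
        · simpa using h
        · simpa using fun h' => h (hp _ _ (hS.1 a ha) h')
      have h3 : (g :: S).filter (fun g => ¬ p g) = g :: S := by
        rw [List.filter_eq_self]
        intro a ha
        simp only [List.mem_cons] at ha
        rcases ha with rfl | ha
        · simpa using h
        · simpa using fun h' => h (hp _ _ (hS.1 a ha) h')
      rw [h2, h3, List.nil_append]

lemma ev_fix {S : List LinFun} {x : ℝ} (h : ∀ g ∈ S, g.eval x = x) : ev S x = x := by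
  induction S with
  | nil => rfl
  | cons g S ih => rw [ev_cons, h g (by simp), ih (fun a ha => h a (by simp [ha]))]

lemma ev_ge {S : List LinFun} {v x : ℝ} (hpos : ∀ g ∈ S, 0 < g.a) (h : ∀ g ∈ S, v ≤ g.eval v)
    (hx : v ≤ x) : v ≤ ev S x := by
  induction S generalizing x with
  | nil => exact hx
  | cons g S ih =>
    rw [ev_cons]
    apply ih (fun a ha => hpos a (by simp [ha])) (fun a ha => h a (by simp [ha]))
    have h1 := h g (by simp)
    have h2 := hpos g (by simp)
    simp only [LinFun.eval] at *
    nlinarith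

lemma fix_of_theta {g : LinFun} {c : ℝ} (h : ¬ g.IsId)
    (hc : g.theta = T c ∨ g.theta = T c + Real.pi) : g.eval c = c := by
  have hp := Real.pi_pos
  apply le_antisymm
  · rw [eval_le_iff h]; rcases hc with hc | hc <;> rw [hc] <;> constructor <;> linarith
  · rw [le_eval_iff h]; rcases hc with hc | hc
    · left; exact hc.le
    · right; exact hc.ge

open Classical in
noncomputable def mid (bm v : ℝ) (S : List LinFun) : List LinFun :=
  ((S.filter (fun g => ¬ g.IsId)).filter (fun g => ¬ (g.theta ≤ T bm))).filter
    (fun g => g.theta < T v + Real.pi)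

open Classical in
noncomputable def fin (bm v : ℝ) (S : List LinFun) : List LinFun :=
  ((S.filter (fun g => ¬ g.IsId)).filter (fun g => ¬ (g.theta ≤ T bm))).filter
    (fun g => ¬ (g.theta < T v + Real.pi))

lemma mem_mid {bm v : ℝ} {S : List LinFun} {g : LinFun} :
    g ∈ mid bm v S ↔ g ∈ S ∧ ¬ g.IsId ∧ T bm < g.theta ∧ g.theta < T v + Real.pi := by
  simp [mid]; tauto

lemma mem_fin {bm v : ℝ} {S : List LinFun} {g : LinFun} :
    g ∈ fin bm v S ↔ g ∈ S ∧ ¬ g.IsId ∧ T bm < g.theta ∧ T v + Real.pi ≤ g.theta := by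
  simp [fin]; tauto

open Classical in
lemma good_sorted {bm w : ℝ} {P S : List LinFun} (h : Good bm w P S) :
    (S.filter (fun g => ¬ g.IsId)).Pairwise (fun g h => g.theta ≤ h.theta) := by
  rw [List.pairwise_filter]
  simpa using h.srt

lemma good_ev {bm w : ℝ} (v : ℝ) {P S : List LinFun} (h : Good bm w P S) :
    ev (fin bm v S) (ev (mid bm v S) bm) = w := by
  classical
  have h1 := good_sorted h
  set N := S.filter (fun g => ¬ g.IsId) with hN
  have h2 := split_sorted (fun g => g.theta ≤ T bm) (fun g h a b => a.trans b) h1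
  have h3 : (N.filter (fun g => ¬ (g.theta ≤ T bm))).Pairwise (fun g h => g.theta ≤ h.theta) :=
    h1.sublist List.filter_sublist
  have h4 := split_sorted (fun g => g.theta < T v + Real.pi) (fun g h a b => lt_of_le_of_lt a b) h3
  have e : ev N bm = w := by rw [hN, ev_filter]; exact h.val
  have e5 : ev (N.filter (fun g => g.theta ≤ T bm)) bm = bm := by
    apply ev_fix
    intro g hg
    obtain ⟨ha, hb⟩ := List.mem_filter.mp hg
    obtain ⟨hc, hd⟩ := List.mem_filter.mp ha
    have hb' : g.theta ≤ T bm := by simpa using hb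
    have hd' : ¬ g.IsId := by simpa using hd
    apply fix_of_theta hd'
    left
    exact le_antisymm hb' (h.suf g hc hd').1
  rw [h2, ev_append, e5, h4, ev_append] at e
  exact e

open Classical in
lemma mid_perm {bm v w : ℝ} {P S : List LinFun} {k : LinFun} (hk : k = ⟨0, bm⟩)
    (h : Good bm w P S) (hw : w ≤ v) :
    mid bm v S = (P ++ k :: S).filter
      (fun g => ¬ g.IsId ∧ T bm < g.theta ∧ g.theta < T v + Real.pi) := by
  have hkT : k.theta = T bm := by rw [hk]; rfl
  have h1 : P.filter (fun g => ¬ g.IsId ∧ T bm < g.theta ∧ g.theta < T v + Real.pi) = [] := by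
    rw [List.filter_eq_nil_iff]
    intro g hg
    simp only [decide_eq_true_eq]
    rintro ⟨h1, h2, h3⟩
    have := T_le_iff.mpr hw
    rcases h.pre g hg h1 with h4 | h4 <;> linarith
  rw [List.filter_append, h1, List.nil_append, List.filter_cons_of_neg (by simp [hkT])]
  rw [mid, List.filter_filter, List.filter_filter]
  apply List.filter_congr
  intro g hg
  simp only [Bool.decide_and, decide_not, not_le]
  by_cases h1 : g.IsId <;> by_cases h2 : T bm < g.theta <;> 
    by_cases h3 : g.theta < T v + Real.pi <;> simp [h1, h2, h3]

lemma good_cmp {bm v w : ℝ} {P S P' S' : List LinFun} {k k' : LinFun} (hk : k = ⟨0, bm⟩)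
    (hk' : k' = ⟨0, bm⟩) (h : Good bm v P S) (h' : Good bm w P' S') (hw : w ≤ v)
    (hp : (P ++ k :: S).Perm (P' ++ k' :: S')) : v ≤ w := by
  classical
  have e1 := good_ev v h
  have e2 := good_ev v h'
  have hpm : (mid bm v S).Perm (mid bm v S') := by
    rw [mid_perm hk h le_rfl, mid_perm hk' h' hw]
    exact hp.filter _
  have e3 : ev (mid bm v S) bm = ev (mid bm v S') bm := by
    apply ev_perm hpm
    · intro g hg; exact (mem_mid.mp hg).2.1
    · exact (good_sorted h).sublist (List.filter_sublist.trans List.filter_sublist)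
    · exact (good_sorted h').sublist (List.filter_sublist.trans List.filter_sublist)
  have e4 : ev (mid bm v S) bm = v := by
    have hpos : ∀ g ∈ fin bm v S, 0 < g.a := fun g hg => h.pos g (mem_fin.mp hg).1
    have hfx : ev (fin bm v S) v = v := by
      apply ev_fix
      intro g hg
      obtain ⟨h1, h2, h3, h4⟩ := mem_fin.mp hg
      exact fix_of_theta h2 (Or.inr (le_antisymm (h.suf g h1 h2).2 h4))
    apply le_antisymm
    · rw [← ev_le_iff hpos, e1, hfx]
    · rw [← ev_le_iff hpos, e1, hfx]
  rw [← e2, ← e3, e4]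
  apply ev_ge (fun g hg => h'.pos g (mem_fin.mp hg).1) _ le_rfl
  intro g hg
  obtain ⟨h1, h2, h3, h4⟩ := mem_fin.mp hg
  rw [le_eval_iff h2]
  exact Or.inr h4

lemma core1 {P S : List LinFun} {k : LinFun} {bm : ℝ} (hk : k.a = 0) (hS : ∀ g ∈ S, 0 < g.a)
    (hopt : ∀ L : List LinFun, L.Perm (P ++ k :: S) → ev S k.b ≤ ev L 0)
    (hm : ∃ m ∈ P ++ k :: S, m.a = 0 ∧ m.b = bm)
    (hc : ∀ m ∈ P ++ k :: S, m.a = 0 → bm ≤ m.b)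
    (hex : ∃ g ∈ P ++ k :: S, T bm < g.theta ∧ g.theta < T bm + Real.pi) :
    k.b = bm ∧ ev S bm < bm := by
  have h1 : k.b = bm := by
    apply le_antisymm _ (hc k (by simp) hk)
    obtain ⟨m, hm1, hm2, hm3⟩ := hm
    rw [List.mem_append, List.mem_cons] at hm1
    rcases hm1 with hm1 | rfl | hm1
    · obtain ⟨A, B, rfl⟩ := List.append_of_mem hm1
      have := hopt ((A ++ k :: B) ++ m :: S) (by
        classical
        rw [List.perm_iff_count]
        intro a
        simp only [List.count_append, List.count_cons]
        omega)
      rw [ev_split hm2, ev_le_iff hS, hm3] at this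
      exact this
    · exact hm3.le
    · exact absurd (hS m hm1) (by rw [hm2]; exact lt_irrefl _)
  refine ⟨h1, ?_⟩
  obtain ⟨g, hg, hg2⟩ := hex
  have hgid : ¬ g.IsId := by
    intro h
    rw [theta_id h] at hg2
    linarith [T_pos bm]
  have hgb := (lt_eval_iff hgid bm).mpr hg2
  have hga : g.a ≠ 0 := by
    intro h
    have := hc g hg h
    rw [eval_const h] at hgb
    linarith
  rw [List.mem_append, List.mem_cons] at hg
  have hfin : ∀ M : List LinFun, (M ++ k :: [g]).Perm (P ++ k :: S) → ev S bm < bm := by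
    intro M hM
    have := hopt _ hM
    rw [ev_split hk, h1] at this
    exact lt_of_le_of_lt this hgb
  rcases hg with hg | rfl | hg
  · obtain ⟨A, B, rfl⟩ := List.append_of_mem hg
    apply hfin (A ++ B ++ S)
    classical
    rw [List.perm_iff_count]
    intro a
    simp only [List.count_append, List.count_cons, List.count_nil]
    omega
  · exact absurd hk hga
  · obtain ⟨A, B, rfl⟩ := List.append_of_mem hg
    apply hfin (P ++ A ++ B)
    classical
    rw [List.perm_iff_count]
    intro a
    simp only [List.count_append, List.count_cons, List.count_nil]
    omega

lemma fix_slope_lt {h : LinFun} (hh : ¬ h.IsId) {x : ℝ} (e : h.theta = T x) : h.a < 1 := by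
  obtain ⟨s, hs, k3, k4⟩ := theta_polar hh
  have := Real.sin_pos_of_pos_of_lt_pi (x := h.theta) (by rw [e]; exact T_pos x)
    (by rw [e]; exact T_lt x)
  have := mul_pos hs this
  linarith

lemma fix_slope_gt {h : LinFun} (hh : ¬ h.IsId) {x : ℝ} (e : h.theta = T x + Real.pi) :
    1 < h.a := by
  obtain ⟨s, hs, k3, k4⟩ := theta_polar hh
  have := Real.sin_pos_of_pos_of_lt_pi (T_pos x) (T_lt x)
  rw [e, Real.sin_add_pi] at k4
  have := mul_pos hs this
  linarith

lemma core2 {P S : List LinFun} {k : LinFun} {bm : ℝ} (hk : k.a = 0) (hS : ∀ g ∈ S, 0 < g.a)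
    (hkb : k.b = bm) (hlt : ev S bm < bm) (hid : ∀ g ∈ S, ¬ g.IsId)
    (hopt : ∀ L : List LinFun, L.Perm (P ++ k :: S) → ev S bm ≤ ev L 0) :
    Good bm (ev S bm) P S := by
  set w := ev S bm with hw
  have hpi := Real.pi_pos
  have hTw : T bm < T w := T_lt_iff.mpr hlt
  -- removal
  have hrem : ∀ A g B, S = A ++ g :: B → g.eval (ev A bm) ≤ ev A bm := by
    intro A g B e
    have hB : ∀ g ∈ B, 0 < g.a := fun a ha => hS a (by simp [e, ha])
    have := hopt ((P ++ [g]) ++ k :: (A ++ B)) (by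
      classical
      rw [e, List.perm_iff_count]
      intro a
      simp only [List.count_append, List.count_cons, List.count_nil]
      omega)
    rw [ev_split hk, hkb, ev_append, hw, e, ev_append, ev_cons, ev_le_iff hB] at this
    exact this
  -- insertion
  have hins : ∀ g ∈ P, ∀ A B, S = A ++ B → ev A bm ≤ g.eval (ev A bm) := by
    intro g hg A B e
    have hB : ∀ g ∈ B, 0 < g.a := fun a ha => hS a (by simp [e, ha])
    obtain ⟨P1, P2, rfl⟩ := List.append_of_mem hg
    have := hopt ((P1 ++ P2) ++ k :: (A ++ g :: B)) (by
      classical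
      rw [e, List.perm_iff_count]
      intro a
      simp only [List.count_append, List.count_cons]
      omega)
    rw [ev_split hk, hkb, ev_append, ev_cons, hw, e, ev_append, ev_le_iff hB] at this
    exact this
  -- decreasing
  have hdec : ∀ A B, S = A ++ B → w ≤ ev A bm := by
    intro A B
    induction B generalizing A with
    | nil => intro e; rw [hw, e, List.append_nil]
    | cons g B ih =>
      intro e
      have h1 := ih (A ++ [g]) (by simp [e])
      rw [ev_append, ev_cons, ev_nil] at h1
      exact h1.trans (hrem A g B e)
  have hdec2 : ∀ A B, S = A ++ B → ev A bm ≤ bm := by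
    intro A
    induction A using List.reverseRecOn with
    | nil => intro B e; exact le_rfl
    | append_singleton A g ih =>
      intro B e
      have h1 := ih (g :: B) (by simp [e])
      rw [ev_append, ev_cons, ev_nil]
      exact (hrem A g B (by simp [e])).trans h1
  -- move to the front
  have hfront : ∀ A h B, S = A ++ h :: B → h.theta = T (ev A bm) → bm ≤ ev A bm := by
    intro A h B e ht
    have hh : ¬ h.IsId := hid h (by simp [e])
    have hB : ∀ g ∈ B, 0 < g.a := fun a ha => hS a (by simp [e, ha])
    have hA : ∀ g ∈ A, 0 < g.a := fun a ha => hS a (by simp [e, ha])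
    have hfix := fix_of_theta hh (Or.inl ht)
    have ha := fix_slope_lt hh ht
    have := hopt (P ++ k :: (h :: (A ++ B))) (by
      classical
      rw [e, List.perm_iff_count]
      intro a
      simp only [List.count_append, List.count_cons]
      omega)
    rw [ev_split hk, hkb, ev_cons, ev_append, hw, e, ev_append, ev_cons, ev_le_iff hB, hfix,
      ev_le_iff hA] at this
    simp only [LinFun.eval] at this hfix
    nlinarith
  -- move to the end
  have hback : ∀ A h B, S = A ++ h :: B → h.theta = T (ev A bm) + Real.pi → ev A bm ≤ w := by
    intro A h B e ht
    have hh : ¬ h.IsId := hid h (by simp [e])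
    have hfix := fix_of_theta hh (Or.inr ht)
    have ha := fix_slope_gt hh ht
    have hww : w = ev B (ev A bm) := by rw [hw, e, ev_append, ev_cons, hfix]
    have := hopt (P ++ k :: (A ++ B ++ [h])) (by
      classical
      rw [e, List.perm_iff_count]
      intro a
      simp only [List.count_append, List.count_cons, List.count_nil]
      omega)
    rw [ev_split hk, hkb, ev_append, ev_append, ev_cons, ev_nil, ← hww] at this
    simp only [LinFun.eval] at this hfix
    nlinarith
  constructor
  · intro g hg hgid
    have h1 := hins g hg [] S rfl
    have h2 := hins g hg S [] (by simp)
    rw [ev_nil, le_eval_iff hgid] at h1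
    rw [← hw, le_eval_iff hgid] at h2
    have := T_lt w
    have := T_pos bm
    rcases h1 with h1 | h1
    · left; exact h1
    · rcases h2 with h2 | h2
      · linarith
      · right; exact h2
  · intro g hg hgid
    obtain ⟨A, B, e⟩ := List.append_of_mem hg
    have h1 := hrem A g B e
    rw [eval_le_iff hgid] at h1
    have h2 := T_le_iff.mpr (hdec A _ e)
    have h3 := T_le_iff.mpr (hdec2 A _ e)
    constructor <;> linarith
  · exact hS
  · have : S.Pairwise (fun g h => g.theta ≤ h.theta) := by
      have htr : IsTrans LinFun (fun g h => g.theta ≤ h.theta) := ⟨fun a b c => le_trans⟩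
      rw [← List.isChain_iff_pairwise, List.isChain_iff_forall_rel_of_append_cons_cons]
      intro g h A B e
      have hg := hid g (by simp [e])
      have hh := hid h (by simp [e])
      have hB : ∀ g ∈ B, 0 < g.a := fun a ha => hS a (by simp [e, ha])
      have h1 := (eval_le_iff hg _).mp (hrem A g (h :: B) e)
      have e' : S = (A ++ [g]) ++ h :: B := by simp [e]
      have hev : ev (A ++ [g]) bm = g.eval (ev A bm) := by rw [ev_append]; rfl
      have h2 := (eval_le_iff hh _).mp (hrem (A ++ [g]) h B e')
      have h3 : T (ev A bm) ≤ T (ev (A ++ [g]) bm) := by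
        rw [T_le_iff, hev]; exact hrem A g _ e
      have h4 := hopt (P ++ k :: (A ++ h :: g :: B)) (by
        classical
        rw [e, List.perm_iff_count]
        intro a
        simp only [List.count_append, List.count_cons]
        omega)
      rw [ev_split hk, hkb, hw, e, ev_append, ev_append, ev_cons, ev_cons, ev_cons, ev_cons,
        ev_le_iff hB] at h4
      obtain ⟨m, hm, hcr⟩ := cross_eq hg hh (ev A bm)
      have h5 : 0 ≤ Real.sin (h.theta - g.theta) := by
        by_contra! hneg
        nlinarith
      by_contra! hbad
      have hle : Real.pi ≤ g.theta - h.theta := by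
        by_contra! hcc
        have := Real.sin_neg_of_neg_of_neg_pi_lt (x := h.theta - g.theta) (by linarith)
          (by linarith)
        linarith
      have hgt : g.theta = T (ev A bm) + Real.pi := by linarith
      have hht : h.theta = T (ev (A ++ [g]) bm) := by linarith
      have h6 := hback A g _ e hgt
      have h7 := hfront (A ++ [g]) h B e' hht
      have h8 := hrem A g _ e
      linarith
    exact this.imp (fun h _ _ => h)
  · rfl

lemma core {P S : List LinFun} {k : LinFun} {bm : ℝ} (hk : k.a = 0) (hS : ∀ g ∈ S, 0 < g.a)
    (hopt : ∀ L : List LinFun, L.Perm (P ++ k :: S) → ev S k.b ≤ ev L 0)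
    (hm : ∃ m ∈ P ++ k :: S, m.a = 0 ∧ m.b = bm)
    (hc : ∀ m ∈ P ++ k :: S, m.a = 0 → bm ≤ m.b)
    (hex : ∃ g ∈ P ++ k :: S, T bm < g.theta ∧ g.theta < T bm + Real.pi) :
    k = ⟨0, bm⟩ ∧ ev S bm < bm ∧ Good bm (ev S bm) P S := by
  classical
  obtain ⟨h1, h2⟩ := core1 hk hS hopt hm hc hex
  refine ⟨by cases k; simp at hk h1; simp [hk, h1], h2, ?_⟩
  have h3 : ev (S.filter (fun g => ¬ g.IsId)) bm = ev S bm := ev_filter S bm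
  have hG := core2 (P := P ++ S.filter (fun g => g.IsId)) (S := S.filter (fun g => ¬ g.IsId))
    (k := k) (bm := bm) hk (fun g hg => hS g (List.mem_filter.mp hg).1) h1 (by rw [h3]; exact h2)
    (fun g hg => by simpa using (List.mem_filter.mp hg).2) (by
      intro L hL
      rw [h3, ← h1]
      apply hopt L
      refine hL.trans ?_
      have hf := List.filter_append_perm (fun g : LinFun => decide g.IsId) S
      have e : S.filter (fun g => ¬ g.IsId) = S.filter (fun g => !(decide g.IsId)) := by
        apply List.filter_congr; intro g _; simp
      rw [e, List.append_assoc]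
      refine List.Perm.append_left P ?_
      refine List.perm_middle.trans ?_
      exact hf.cons k)
  rw [h3] at hG
  refine ⟨fun g hg => hG.pre g (by simp [hg]), fun g hg hid => hG.suf g (by simp [hg, hid]) hid,
    hS, ?_, rfl⟩
  have := hG.srt
  rw [List.pairwise_filter] at this
  refine this.imp ?_
  intro a b h ha hb
  exact h (by simpa using ha) (by simpa using hb) ha hb

def preL {n : ℕ} (f : Fin n → LinFun) (σ : Equiv.Perm (Fin n)) (q : Fin n) : List LinFun :=
  (permList f σ).take q
def sufL {n : ℕ} (f : Fin n → LinFun) (σ : Equiv.Perm (Fin n)) (q : Fin n) : List LinFun :=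
  (permList f σ).drop (q + 1)

lemma permList_split {n : ℕ} (f : Fin n → LinFun) (σ : Equiv.Perm (Fin n)) (q : Fin n) :
    permList f σ = preL f σ q ++ f (σ q) :: sufL f σ q := by
  have h : (q : ℕ) < (permList f σ).length := by simp [permList]
  have h2 : (permList f σ)[(q : ℕ)] = f (σ q) := by simp [permList]
  unfold preL sufL
  rw [← h2, ← List.drop_eq_getElem_cons h, List.take_append_drop]

lemma mem_preL {n : ℕ} {f : Fin n → LinFun} {σ : Equiv.Perm (Fin n)} {q : Fin n} {g : LinFun} :
    g ∈ preL f σ q ↔ ∃ i : Fin n, i < q ∧ f (σ i) = g := by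
  unfold preL permList
  rw [List.mem_take_iff_getElem]
  constructor
  · rintro ⟨i, hi, rfl⟩
    simp at hi
    exact ⟨⟨i, by omega⟩, by rw [Fin.lt_def]; simp; omega, by simp⟩
  · rintro ⟨i, hi, rfl⟩
    refine ⟨i, by simpa using hi, by simp⟩

lemma mem_sufL {n : ℕ} {f : Fin n → LinFun} {σ : Equiv.Perm (Fin n)} {q : Fin n} {g : LinFun} :
    g ∈ sufL f σ q ↔ ∃ i : Fin n, q < i ∧ f (σ i) = g := by
  unfold sufL permList
  rw [List.mem_drop_iff_getElem]
  constructor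
  · rintro ⟨i, hi, rfl⟩
    simp at hi
    exact ⟨⟨q + 1 + i, by omega⟩, by rw [Fin.lt_def]; simp; omega, by simp⟩
  · rintro ⟨i, hi, rfl⟩
    rw [Fin.lt_def] at hi
    refine ⟨i - (q + 1), by simp; omega, ?_⟩
    simp only [List.getElem_ofFn]
    congr 2
    ext
    simp; omega

lemma pairwise_sufL {n : ℕ} {f : Fin n → LinFun} {σ : Equiv.Perm (Fin n)} {q : Fin n}
    {R : LinFun → LinFun → Prop} :
    (sufL f σ q).Pairwise R ↔ ∀ i j : Fin n, q < i → i < j → R (f (σ i)) (f (σ j)) := by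
  unfold sufL permList
  rw [List.pairwise_iff_getElem]
  constructor
  · intro h i j hi hj
    rw [Fin.lt_def] at hi hj
    have := h (i - (q + 1)) (j - (q + 1)) (by simp; omega) (by simp; omega) (by omega)
    simp only [List.getElem_drop, List.getElem_ofFn] at this
    convert this using 3
    · ext; simp; omega
    · ext; simp; omega
  · intro h i j hi hj hij
    simp only [List.getElem_drop, List.getElem_ofFn]
    apply h
    · rw [Fin.lt_def]; simp; omega
    · rw [Fin.lt_def]; simp; omega

lemma sufL_congr {n : ℕ} {f : Fin n → LinFun} {σ τ : Equiv.Perm (Fin n)} {q : Fin n}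
    (h : ∀ i, q < i → σ i = τ i) : sufL f σ q = sufL f τ q := by
  unfold sufL permList
  apply List.ext_getElem
  · simp
  · intro i h1 h2
    simp only [List.getElem_drop, List.getElem_ofFn]
    rw [h]
    rw [Fin.lt_def]; simp; omega

lemma permComp_split {n : ℕ} {f : Fin n → LinFun} {σ : Equiv.Perm (Fin n)} {q : Fin n}
    (h : (f (σ q)).a = 0) : permComp f σ = ⟨0, ev (sufL f σ q) (f (σ q)).b⟩ := by
  unfold permComp
  rw [permList_split f σ q, compList_split h]

lemma mem_permList {n : ℕ} {f : Fin n → LinFun} {σ : Equiv.Perm (Fin n)} {g : LinFun} :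
    g ∈ permList f σ ↔ ∃ i, f i = g := by
  unfold permList
  rw [List.mem_ofFn]
  constructor
  · rintro ⟨i, rfl⟩; exact ⟨_, rfl⟩
  · rintro ⟨i, rfl⟩; exact ⟨σ.symm i, by simp⟩

lemma exists_last {n : ℕ} (p : Fin n → Prop) (h : ∃ i, p i) : ∃ q, p q ∧ ∀ j, q < j → ¬ p j := by
  classical
  obtain ⟨i, hi⟩ := h
  obtain ⟨q, hq, hm⟩ := Finset.exists_max_image (Finset.univ.filter p) id ⟨i, by simp [hi]⟩
  refine ⟨q, by simpa using hq, fun j hj hp => ?_⟩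
  exact absurd (hm j (by simp [hp])) (not_le.mpr hj)

lemma exists_first {n : ℕ} (p : Fin n → Prop) (h : ∃ i, p i) : ∃ q, p q ∧ ∀ j, j < q → ¬ p j := by
  classical
  obtain ⟨i, hi⟩ := h
  obtain ⟨q, hq, hm⟩ := Finset.exists_min_image (Finset.univ.filter p) id ⟨i, by simp [hi]⟩
  refine ⟨q, by simpa using hq, fun j hj hp => ?_⟩
  exact absurd (hm j (by simp [hp])) (not_le.mpr hj)

lemma exists_cut {n : ℕ} (p : Fin n → Prop) (h : ∀ i j, i ≤ j → p j → p i) :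
    ∃ c : ℕ, ∀ i : Fin n, p i ↔ i.val < c := by
  by_cases hp : ∃ i, ¬ p i
  · obtain ⟨c, hc, hc2⟩ := exists_first _ hp
    refine ⟨c, fun i => ⟨fun hi => ?_, fun hi => ?_⟩⟩
    · by_contra! hh
      exact hc (h c i hh hi)
    · exact not_not.mp (hc2 i hi)
  · push Not at hp
    exact ⟨n, fun i => ⟨fun _ => i.2, fun _ => hp i⟩⟩

lemma sort_prefix {n : ℕ} (q : Fin n) (key : Fin n → ℝ) : ∃ τ : Equiv.Perm (Fin n),
    (∀ i, q ≤ i → τ i = i) ∧ ∀ i j, i ≤ j → j < q → key (τ i) ≤ key (τ j) := by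
  classical
  let e : Fin q.val ↪ Fin n := Fin.castLEEmb q.2.le
  let s := Tuple.sort (fun i => key (e i))
  have hs : Monotone ((fun i => key (e i)) ∘ s) := Tuple.monotone_sort _
  refine ⟨s.viaFintypeEmbedding e, ?_, ?_⟩
  · intro i hi
    apply Equiv.Perm.viaFintypeEmbedding_apply_notMem_range
    rintro ⟨j, rfl⟩
    rw [Fin.le_def] at hi
    have := j.2
    simp [e] at hi
    omega
  · intro i j hij hj
    have hiq : i < q := lt_of_le_of_lt hij hj
    have h1 : ∀ k : Fin n, ∀ hk : k < q, s.viaFintypeEmbedding e k = e (s ⟨k, hk⟩) := by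
      intro k hk
      exact Equiv.Perm.viaFintypeEmbedding_apply_image s e ⟨k, hk⟩
    rw [h1 i hiq, h1 j hj]
    exact hs (show (⟨i, hiq⟩ : Fin q.val) ≤ ⟨j, hj⟩ from hij)

lemma int_zero {k : ℤ} (h1 : -(2 * Real.pi) < 2 * Real.pi * k) (h2 : 2 * Real.pi * k < 2 * Real.pi) :
    k = 0 := by
  have hp := Real.pi_pos
  have h3 : ((-1 : ℤ) : ℝ) < k := by push_cast; nlinarith
  have h4 : (k : ℝ) < (1 : ℤ) := by push_cast; nlinarith
  have := Int.cast_lt.mp h3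
  have := Int.cast_lt.mp h4
  omega

lemma icc_le {x y p : ℝ} (hx : 0 ≤ x) (hy : y < 2 * Real.pi) (hp : 0 ≤ p) (hp' : p < 2 * Real.pi)
    (h : p ∈ Icc2pi x y) (hxy : x ≤ y) : x ≤ p ∧ p ≤ y := by
  obtain ⟨l1, l2, ⟨k1, h1⟩, ⟨k2, h2⟩, h3, h4, h5, h6⟩ := h
  have e : k2 - k1 = 0 := by apply int_zero <;> push_cast <;> linarith
  have e' : k2 = k1 := by omega
  rw [e'] at h2
  have : k1 = 0 := by apply int_zero <;> linarith
  rw [this] at h1 h2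
  simp at h1 h2
  constructor <;> linarith

lemma icc_gt {x y p : ℝ} (hx : 0 ≤ x) (hx' : x < 2 * Real.pi) (hy0 : 0 ≤ y) (hy : y < 2 * Real.pi)
    (hp : 0 ≤ p) (hp' : p < 2 * Real.pi)
    (h : p ∈ Icc2pi x y) (hxy : y < x) : x ≤ p ∨ p ≤ y := by
  obtain ⟨l1, l2, ⟨k1, h1⟩, ⟨k2, h2⟩, h3, h4, h5, h6⟩ := h
  have hpi := Real.pi_pos
  by_contra! hc
  have a1 : (k1 : ℝ) < (1 : ℤ) := by
    push_cast; by_contra! hh; nlinarith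
  have a2 : ((-1 : ℤ) : ℝ) < (k2 : ℝ) := by
    push_cast; by_contra! hh; nlinarith
  have a3 : k1 ≠ 0 := by
    rintro rfl; simp at h1; linarith
  have a4 : k2 ≠ 0 := by
    rintro rfl; simp at h2; linarith
  have b1 := Int.cast_lt.mp a1
  have b2 := Int.cast_lt.mp a2
  have b3 : (2 : ℤ) ≤ k2 - k1 := by omega
  have b4 : ((2 : ℤ) : ℝ) ≤ ((k2 - k1 : ℤ) : ℝ) := Int.cast_le.mpr b3
  push_cast at b4
  nlinarith

lemma opt_good {n : ℕ} {f : Fin n → LinFun} (hf : ∀ i, 0 ≤ (f i).a) {bmin : ℝ}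
    (hbmin1 : ∃ i, (f i).a = 0 ∧ (f i).b = bmin)
    (hbmin2 : ∀ i, (f i).a = 0 → bmin ≤ (f i).b)
    (hex : ∃ i : Fin n, T bmin < (f i).theta ∧ (f i).theta < T bmin + Real.pi)
    {σ : Equiv.Perm (Fin n)} (h : IsMinimum f σ) {q : Fin n} (hq : (f (σ q)).a = 0)
    (hq2 : ∀ j, q < j → (f (σ j)).a ≠ 0) :
    f (σ q) = ⟨0, bmin⟩ ∧ ev (sufL f σ q) bmin < bmin ∧
      Good bmin (ev (sufL f σ q) bmin) (preL f σ q) (sufL f σ q) := by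
  apply core hq
  · intro g hg
    obtain ⟨i, hi, rfl⟩ := mem_sufL.mp hg
    exact lt_of_le_of_ne (hf _) (Ne.symm (hq2 i hi))
  · intro L hL
    rw [← permList_split] at hL
    obtain ⟨τ, hτ⟩ := exists_perm_of_perm f σ L hL
    have := h τ
    rw [permComp_split hq] at this
    unfold permComp at this
    rw [hτ, compList_b] at this
    exact this
  · rw [← permList_split]
    obtain ⟨i, hi⟩ := hbmin1
    exact ⟨f i, mem_permList.mpr ⟨i, rfl⟩, hi⟩
  · rw [← permList_split]
    intro m hm
    obtain ⟨i, rfl⟩ := mem_permList.mp hm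
    exact hbmin2 i
  · rw [← permList_split]
    obtain ⟨i, hi⟩ := hex
    exact ⟨f i, mem_permList.mpr ⟨i, rfl⟩, hi⟩

lemma ccw_good {n : ℕ} {f : Fin n → LinFun} (hf : ∀ i, 0 ≤ (f i).a) {bmin : ℝ}
    (hbmin1 : ∃ i, (f i).a = 0 ∧ (f i).b = bmin)
    (hbmin2 : ∀ i, (f i).a = 0 → bmin ≤ (f i).b)
    (hex : ∃ i : Fin n, T bmin < (f i).theta ∧ (f i).theta < T bmin + Real.pi)
    {μ : Equiv.Perm (Fin n)} (hccw : Counterclockwise f μ) {s t : Fin n}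
    (hs : ¬ (f (μ s)).IsId) (hs2 : ∀ i, i < s → (f (μ i)).IsId)
    (ht : ¬ (f (μ t)).IsId) (ht2 : ∀ i, t < i → (f (μ i)).IsId)
    (hcut : (permComp f μ).theta + Real.pi ∈ Icc2pi ((f (μ t)).theta) ((f (μ s)).theta))
    {q : Fin n} (hq : (f (μ q)).a = 0)
    (hq2 : ∀ j, q < j → (f (μ j)).a ≠ 0) :
    f (μ q) = ⟨0, bmin⟩ ∧ 
      Good bmin (ev (sufL f μ q) bmin) (preL f μ q) (sufL f μ q) := by
  have hpi := Real.pi_pos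
  rw [permComp_split hq] at hcut
  set v := ev (sufL f μ q) (f (μ q)).b with hv
  change T v + Real.pi ∈ _ at hcut
  have hv1 := T_pos v
  have hv2 := T_lt v
  have hst : ∀ i, ¬ (f (μ i)).IsId → s ≤ i ∧ i ≤ t := by
    intro i hi
    constructor
    · by_contra! h; exact hi (hs2 i h)
    · by_contra! h; exact hi (ht2 i h)
  obtain ⟨i0, hi0, hi0b⟩ := hbmin1
  obtain ⟨p, rfl⟩ := μ.surjective i0
  have hpid := const_not_id hi0
  have hpeq : f (μ p) = ⟨0, bmin⟩ := by
    cases hh : f (μ p); rw [hh] at hi0 hi0b; simp at hi0 hi0b; simp [hi0, hi0b]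
  have hpT : (f (μ p)).theta = T bmin := by rw [hpeq]; rfl
  have hb1 := T_pos bmin
  have hb2 := T_lt bmin
  have main : ∃ c : ℕ, (∀ i j : Fin n, ¬ (f (μ i)).IsId → ¬ (f (μ j)).IsId → c ≤ i.val → i ≤ j →
      (f (μ i)).theta ≤ (f (μ j)).theta) ∧
      (∀ i : Fin n, ¬ (f (μ i)).IsId → i.val < c → T v + Real.pi ≤ (f (μ i)).theta) ∧
      (∀ i : Fin n, ¬ (f (μ i)).IsId → c ≤ i.val → (f (μ i)).theta ≤ T v + Real.pi) := by
    obtain ⟨c, hc⟩ := hccw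
    by_cases hsc : s.val < c ∧ c ≤ t.val
    · have h1 := icc_le (theta_nonneg _) (theta_lt _) (by linarith) (by linarith) hcut
        (hc t s ht hs (Or.inr (Or.inr ⟨hsc.2, hsc.1⟩)))
      refine ⟨c, fun i j hi hj h h' => hc i j hi hj (Or.inl ⟨h, h'⟩), ?_, ?_⟩
      · intro i hi hic
        exact h1.2.trans (hc s i hs hi (Or.inr (Or.inl ⟨(hst i hi).1, hic⟩)))
      · intro i hi hic
        exact (hc i t hi ht (Or.inl ⟨hic, (hst i hi).2⟩)).trans h1.1
    · have hmono : ∀ i j : Fin n, ¬ (f (μ i)).IsId → ¬ (f (μ j)).IsId → i ≤ j →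
          (f (μ i)).theta ≤ (f (μ j)).theta := by
        intro i j hi hj hij
        apply hc i j hi hj
        have h1 := hst i hi
        have h2 := hst j hj
        simp only [Fin.le_def] at *
        omega
      obtain ⟨g, hg1, hg2⟩ := hex
      obtain ⟨g, rfl⟩ := μ.surjective g
      have hgid : ¬ (f (μ g)).IsId := by
        intro h
        rw [theta_id h] at hg1
        linarith
      have hsp := hmono s p hs hpid (hst p hpid).1
      have hgt := hmono g t hgid ht (hst g hgid).2
      have h1 := icc_gt (theta_nonneg _) (theta_lt _) (theta_nonneg _) (theta_lt _)
        (by linarith) (by linarith) hcut (by linarith)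
      have h2 : (f (μ t)).theta ≤ T v + Real.pi := by
        rcases h1 with h1 | h1
        · exact h1
        · linarith
      refine ⟨0, fun i j hi hj _ h' => hmono i j hi hj h', ?_, ?_⟩
      · intro i hi hic; omega
      · intro i hi _
        exact (hmono i t hi ht (hst i hi).2).trans h2
  obtain ⟨c, hc1, hc2, hc3⟩ := main
  have hqid := const_not_id hq
  have hqeq : f (μ q) = ⟨0, (f (μ q)).b⟩ := by
    cases hh : f (μ q); rw [hh] at hq; simp at hq; simp [hq]
  have hqT : (f (μ q)).theta = T (f (μ q)).b := by
    conv_lhs => rw [hqeq]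
    rfl
  have hpc : c ≤ p.val := by
    by_contra! h
    have := hc2 p hpid h
    linarith
  have hpq : p ≤ q := by
    by_contra! h
    exact hq2 p h hi0
  have hqc : c ≤ q.val := le_trans hpc hpq
  have hqb : (f (μ q)).b = bmin := by
    apply le_antisymm _ (hbmin2 _ hq)
    have := hc1 p q hpid hqid hpc hpq
    rw [hqT, hpT, T_le_iff] at this
    exact this
  rw [hqb] at hqT hqeq hv
  refine ⟨hqeq, ?_⟩
  rw [← hv]
  refine ⟨?_, ?_, ?_, ?_, hv.symm⟩
  · intro g hg hid
    obtain ⟨i, hi, rfl⟩ := mem_preL.mp hg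
    by_cases h : i.val < c
    · right; exact hc2 i hid h
    · left; rw [← hqT]; exact hc1 i q hid hqid (by omega) hi.le
  · intro g hg hid
    obtain ⟨i, hi, rfl⟩ := mem_sufL.mp hg
    have : c ≤ i.val := le_trans hqc (le_of_lt hi)
    constructor
    · rw [← hqT]; exact hc1 q i hqid hid hqc hi.le
    · exact hc3 i hid this
  · intro g hg
    obtain ⟨i, hi, rfl⟩ := mem_sufL.mp hg
    exact lt_of_le_of_ne (hf _) (Ne.symm (hq2 i hi))
  · rw [pairwise_sufL]
    intro i j hi hij h1 h2
    exact hc1 i j h1 h2 (le_trans hqc (le_of_lt hi)) hij.le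

/-- characterization of optimal permutations for monotone nondecreasing
linear functions when `β_OPT < β_min`. Here `bmin` is `β_min`, `σ = ρ.trans μ` is the
composition `μ ∘ ρ`, and `q` is `q_μ`, the last position of `μ` carrying a constant. -/
theorem stmt16 {n : ℕ} (f : Fin n → LinFun) (hf : ∀ i, 0 ≤ (f i).a)
    (hconst : ∃ i, (f i).a = 0) (bmin : ℝ)
    (hbmin1 : ∃ i, (f i).a = 0 ∧ (f i).b = bmin)
    (hbmin2 : ∀ i, (f i).a = 0 → bmin ≤ (f i).b)
    (hex : ∃ i : Fin n, (f i).theta ∈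
      Set.Ioo (LinFun.theta ⟨0, bmin⟩) (LinFun.theta ⟨0, bmin⟩ + Real.pi))
    (σ : Equiv.Perm (Fin n)) :
    IsMinimum f σ ↔
      ∃ μ ρ : Equiv.Perm (Fin n), σ = ρ.trans μ ∧ Counterclockwise f μ ∧
        (∃ s t : Fin n,
          (¬ (f (μ s)).IsId ∧ ∀ i, i < s → (f (μ i)).IsId) ∧
          (¬ (f (μ t)).IsId ∧ ∀ i, t < i → (f (μ i)).IsId) ∧
          (permComp f μ).theta + Real.pi ∈
            Icc2pi ((f (μ t)).theta) ((f (μ s)).theta)) ∧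
        (∀ q : Fin n, ((f (μ q)).a = 0 ∧ ∀ j, q < j → (f (μ j)).a ≠ 0) →
          ∀ i : Fin n, q ≤ i → ρ i = i) := by
  have hex' : ∃ i : Fin n, T bmin < (f i).theta ∧ (f i).theta < T bmin + Real.pi := hex
  have hpi := Real.pi_pos
  have hlast : ∀ π : Equiv.Perm (Fin n), ∃ q, (f (π q)).a = 0 ∧ ∀ j, q < j → (f (π j)).a ≠ 0 := by
    intro π
    apply exists_last (fun q => (f (π q)).a = 0)
    obtain ⟨i, hi⟩ := hconst
    exact ⟨π.symm i, by simpa using hi⟩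
  constructor
  · intro hmin
    obtain ⟨q, hq, hq2⟩ := hlast σ
    obtain ⟨hk, hlt, hG⟩ := opt_good hf hbmin1 hbmin2 hex' hmin hq hq2
    set w := ev (sufL f σ q) bmin with hw
    have hTlt : T bmin < T w := T_lt_iff.mpr hlt
    have hb1 := T_pos bmin
    have hb2 := T_lt bmin
    have hw1 := T_pos w
    have hw2 := T_lt w
    have hkT : (f (σ q)).theta = T bmin := by rw [hk]; rfl
    let key : Fin n → ℝ := fun i => if T w + Real.pi ≤ (f (σ i)).theta
      then (f (σ i)).theta - 2 * Real.pi else (f (σ i)).theta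
    obtain ⟨τ, hτ1, hτ2⟩ := sort_prefix q key
    have hτlt : ∀ i, i < q → τ i < q := by
      intro i hi
      by_contra! h
      have := τ.injective (hτ1 _ h)
      rw [this] at h
      exact absurd hi (not_lt.mpr h)
    set μ : Equiv.Perm (Fin n) := τ.trans σ with hμ
    have hμv : ∀ i, μ i = σ (τ i) := fun i => rfl
    have hμq : ∀ i, q ≤ i → μ i = σ i := fun i hi => by rw [hμv, hτ1 i hi]
    obtain ⟨c, hc⟩ := exists_cut (fun i => i < q ∧ T w + Real.pi ≤ (f (μ i)).theta) (by
      rintro i j hij ⟨h1, h2⟩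
      refine ⟨lt_of_le_of_lt hij h1, ?_⟩
      have := hτ2 i j hij h1
      simp only [key, ← hμv, if_pos h2] at this
      by_contra hc
      rw [if_neg hc] at this
      have := theta_lt (f (μ j))
      have := theta_nonneg (f (μ i))
      linarith)
    have hpre : ∀ i, i < q → ¬ (f (μ i)).IsId →
        (f (μ i)).theta ≤ T bmin ∨ T w + Real.pi ≤ (f (μ i)).theta := by
      intro i hi hid
      exact hG.pre _ (mem_preL.mpr ⟨τ i, hτlt i hi, rfl⟩) hid
    have hsuf : ∀ i, q ≤ i → ¬ (f (μ i)).IsId →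
        T bmin ≤ (f (μ i)).theta ∧ (f (μ i)).theta ≤ T w + Real.pi := by
      intro i hi hid
      rw [hμq i hi] at hid ⊢
      rcases eq_or_lt_of_le hi with rfl | hi
      · rw [hkT]; constructor <;> linarith
      · exact hG.suf _ (mem_sufL.mpr ⟨i, hi, rfl⟩) hid
    have hcq : c ≤ q.val := by
      by_contra! h
      exact lt_irrefl _ ((hc q).mpr h).1
    have hsort : ∀ i j, q ≤ i → i ≤ j → ¬ (f (μ i)).IsId → ¬ (f (μ j)).IsId →
        (f (μ i)).theta ≤ (f (μ j)).theta := by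
      intro i j hi hij h1 h2
      rcases eq_or_lt_of_le hij with rfl | hij
      · exact le_rfl
      · rcases eq_or_lt_of_le hi with rfl | hi
        · rw [hμq q le_rfl, hkT]
          exact (hsuf j hij.le h2).1
        · have := pairwise_sufL.mp hG.srt i j hi hij
          rw [hμq i hi.le] at h1 ⊢
          rw [hμq j (hi.le.trans hij.le)] at h2 ⊢
          exact this h1 h2
    have hlow : ∀ i : Fin n, c ≤ i.val → i < q → ¬ T w + Real.pi ≤ (f (μ i)).theta := by
      intro i hi hiq h
      have := (hc i).mp ⟨hiq, h⟩
      omega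
    have hqμ : (f (μ q)).a = 0 := by rw [hμq q le_rfl]; exact hq
    have hcomp : permComp f μ = ⟨0, w⟩ := by
      rw [permComp_split hqμ, sufL_congr (τ := σ) (fun i hi => hμq i hi.le), hμq q le_rfl, hk]
    refine ⟨μ, τ.symm, ?_, ⟨c, ?_⟩, ?_, ?_⟩
    · ext i; simp [hμ]
    · rintro i j hi hj (⟨h1, h2⟩ | ⟨h1, h2⟩ | ⟨h1, h2⟩)
      · rcases lt_or_ge j q with hjq | hjq
        · have hiq := lt_of_le_of_lt h2 hjq
          have := hτ2 i j h2 hjq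
          simp only [key, ← hμv] at this
          rw [if_neg (hlow i h1 hiq), if_neg (hlow j (le_trans h1 h2) hjq)] at this
          exact this
        · rcases lt_or_ge i q with hiq | hiq
          · have h3 := (hpre i hiq hi).resolve_right (hlow i h1 hiq)
            exact h3.trans (hsuf j hjq hj).1
          · exact hsort i j hiq h2 hi hj
      · have hj2 := (hc j).mpr h2
        have hi2 := (hc i).mpr (lt_of_le_of_lt h1 h2)
        have := hτ2 i j h1 hj2.1
        simp only [key, ← hμv] at this
        rw [if_pos hi2.2, if_pos hj2.2] at this
        linarith
      · have hj2 := (hc j).mpr h2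
        rcases lt_or_ge i q with hiq | hiq
        · have := hlow i h1 hiq
          linarith [hj2.2]
        · exact (hsuf i hiq hi).2.trans hj2.2
    · have hqid := const_not_id hqμ
      obtain ⟨s, hs, hs2⟩ := exists_first (fun i => ¬ (f (μ i)).IsId) ⟨q, hqid⟩
      obtain ⟨t, ht, ht2⟩ := exists_last (fun i => ¬ (f (μ i)).IsId) ⟨q, hqid⟩
      simp only [not_not] at hs2 ht2
      refine ⟨s, t, ⟨hs, hs2⟩, ⟨ht, ht2⟩, ?_⟩
      rw [hcomp]
      change T w + Real.pi ∈ _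
      have hqt : q ≤ t := by
        by_contra! h; exact hqid (ht2 q h)
      have hsq : s ≤ q := by
        by_contra! h; exact hqid (hs2 q h)
      have ht3 := hsuf t hqt ht
      have hs4 := theta_lt (f (μ s))
      have hs5 := theta_nonneg (f (μ s))
      have ht4 := theta_lt (f (μ t))
      have ht5 := theta_nonneg (f (μ t))
      by_cases hsc : s.val < c
      · have hs3 := ((hc s).mpr hsc).2
        refine ⟨(f (μ t)).theta, (f (μ s)).theta, ⟨0, by simp⟩, ⟨0, by simp⟩, ?_, ?_, ?_, ?_⟩ <;>
          linarith
      · have hsb : (f (μ s)).theta ≤ T bmin := by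
          rcases eq_or_lt_of_le hsq with rfl | hsq
          · rw [hμq s le_rfl, hkT]
          · exact (hpre s hsq hs).resolve_right (hlow s (by omega) hsq)
        have htb : T bmin < (f (μ t)).theta := by
          apply lt_of_le_of_ne ht3.1
          intro he
          have : w = bmin := by
            apply ev_fix
            intro g hg
            obtain ⟨i, hi, rfl⟩ := mem_sufL.mp hg
            by_cases hid : (f (σ i)).IsId
            · exact eval_id hid _
            · apply fix_of_theta hid
              left
              have hid' : ¬ (f (μ i)).IsId := by rw [hμq i hi.le]; exact hid
              rw [← hμq i hi.le]
              apply le_antisymm _ (hsuf i hi.le hid').1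
              rw [he]
              apply hsort i t hi.le _ hid' ht
              by_contra! h
              exact hid' (ht2 i h)
          linarith
        refine ⟨(f (μ t)).theta, (f (μ s)).theta + 2 * Real.pi, ⟨0, by simp⟩, ⟨1, by simp⟩,
          ?_, ?_, ?_, ?_⟩ <;> linarith
    · intro q' ⟨hq'1, hq'2⟩ i hi
      have : q ≤ q' := by
        by_contra! h
        exact hq'2 q h hqμ
      rw [Equiv.symm_apply_eq, hτ1 i (this.trans hi)]
  · rintro ⟨μ, ρ, rfl, hccw, ⟨s, t, ⟨hs, hs2⟩, ⟨ht, ht2⟩, hcut⟩, hρ⟩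
    obtain ⟨q, hq, hq2⟩ := hlast μ
    have hρ' := hρ q ⟨hq, hq2⟩
    obtain ⟨hk, hG⟩ := ccw_good hf hbmin1 hbmin2 hex' hccw hs hs2 ht ht2 hcut hq hq2
    obtain ⟨σ', -, hσ'⟩ := Finset.exists_min_image (Finset.univ : Finset (Equiv.Perm (Fin n)))
      (fun σ => (permComp f σ).b) ⟨1, by simp⟩
    have hmin : IsMinimum f σ' := fun τ => hσ' τ (by simp)
    obtain ⟨q', hq', hq2'⟩ := hlast σ'
    obtain ⟨hk', hlt', hG'⟩ := opt_good hf hbmin1 hbmin2 hex' hmin hq' hq2'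
    have e1 : permComp f μ = ⟨0, ev (sufL f μ q) bmin⟩ := by
      rw [permComp_split hq, hk]
    have e2 : permComp f σ' = ⟨0, ev (sufL f σ' q') bmin⟩ := by
      rw [permComp_split hq', hk']
    have hρv : ∀ i, q ≤ i → (ρ.trans μ) i = μ i := fun i hi => by
      rw [Equiv.trans_apply, hρ' i hi]
    have e3 : permComp f (ρ.trans μ) = ⟨0, ev (sufL f μ q) bmin⟩ := by
      rw [permComp_split (q := q) (by rw [hρv q le_rfl]; exact hq),
        sufL_congr (τ := μ) (fun i hi => hρv i hi.le), hρv q le_rfl, hk]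
    have hle := hmin μ
    rw [e1, e2] at hle
    have hge := good_cmp hk hk' hG hG' hle (by
      rw [← permList_split, ← permList_split]; exact permList_perm f μ σ')
    intro τ
    have h1 := hmin τ
    rw [e2] at h1
    rw [e3]
    exact hge.trans h1
end

section
/- Let f₁,…,f_n be monotone nondecreasing linear functions (α(f_i) ≥ 0 for all i). A permutation σ of [n] is optimal (β(f^σ) ≤ β(f^ρ) for every permutation ρ) if and only if σ is locally optimal (β(f^σ) ≤ β(f^μ) for every μ in the neighborhood N(σ)). -/
namespace LocOpt

abbrev al (L : List LinFun) : ℝ := (compList L).a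
abbrev be (L : List LinFun) : ℝ := (compList L).b

/-- determinant of the associated vectors -/
def dt (f g : LinFun) : ℝ := f.b * (1 - g.a) - g.b * (1 - f.a)

lemma foldl_comp (L : List LinFun) (g : LinFun) :
    L.foldl (fun acc g => g.comp acc) g = (compList L).comp g := by
  induction L generalizing g with
  | nil => simp [compList, LinFun.comp, LinFun.idf]
  | cons x L ih =>
    have h1 := ih (x.comp g)
    have h2 := ih (x.comp LinFun.idf)
    simp only [List.foldl_cons, compList] at *
    rw [h1, h2]
    simp only [LinFun.comp, LinFun.idf, LinFun.mk.injEq]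
    constructor <;> ring

lemma comp_append (A B : List LinFun) :
    compList (A ++ B) = (compList B).comp (compList A) := by
  conv_lhs => rw [compList, List.foldl_append, foldl_comp]
  rfl

lemma al_append (A B : List LinFun) : al (A ++ B) = al B * al A := by
  simp [al, comp_append, LinFun.comp]

lemma be_append (A B : List LinFun) : be (A ++ B) = al B * be A + be B := by
  simp [al, be, comp_append, LinFun.comp]

lemma comp_single (x : LinFun) : compList [x] = x := by
  simp [compList, LinFun.comp, LinFun.idf]

lemma comp_cons (x : LinFun) (L : List LinFun) :
    compList (x :: L) = (compList L).comp x := by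
  have := comp_append [x] L
  rwa [comp_single] at this

lemma al_cons (x : LinFun) (L : List LinFun) : al (x :: L) = al L * x.a := by
  simp [al, comp_cons, LinFun.comp]

lemma be_cons (x : LinFun) (L : List LinFun) : be (x :: L) = al L * x.b + be L := by
  simp [al, be, comp_cons, LinFun.comp]

lemma al_nil : al [] = 1 := rfl
lemma be_nil : be [] = 0 := rfl

lemma al_pos (L : List LinFun) (h : ∀ g ∈ L, 0 < g.a) : 0 < al L := by
  induction L with
  | nil => simp [al_nil]
  | cons x L ih =>
    rw [al_cons]
    exact mul_pos (ih fun g hg => h g (by simp [hg])) (h x (by simp))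

lemma al_nonneg (L : List LinFun) (h : ∀ g ∈ L, 0 ≤ g.a) : 0 ≤ al L := by
  induction L with
  | nil => simp [al_nil]
  | cons x L ih =>
    rw [al_cons]
    exact mul_nonneg (ih fun g hg => h g (by simp [hg])) (h x (by simp))

lemma swap_eq (P A B S : List LinFun) :
    be (P ++ (B ++ (A ++ S))) - be (P ++ (A ++ (B ++ S))) =
      al S * dt (compList A) (compList B) := by
  simp only [be_append, al_append, dt, al, be]
  ring

lemma dt_append_left (A B : List LinFun) (g : LinFun) :
    dt (compList (A ++ B)) g = al B * dt (compList A) g + dt (compList B) g := by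
  simp only [comp_append, LinFun.comp, dt, al]; ring

lemma dt_append_right (A B : List LinFun) (g : LinFun) :
    dt g (compList (A ++ B)) = al B * dt g (compList A) + dt g (compList B) := by
  simp only [comp_append, LinFun.comp, dt, al]; ring

lemma dt_swap (f g : LinFun) : dt f g = - dt g f := by simp only [dt]; ring

def LO (L : List LinFun) : Prop :=
  ∀ P A B S, L = P ++ (A ++ (B ++ S)) → be L ≤ be (P ++ (B ++ (A ++ S)))

def Opt (L : List LinFun) : Prop := ∀ L', L'.Perm L → be L ≤ be L'

lemma swap_perm (P A B S : List LinFun) :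
    (P ++ (B ++ (A ++ S))).Perm (P ++ (A ++ (B ++ S))) := by
  apply List.Perm.append_left
  rw [← List.append_assoc, ← List.append_assoc]
  exact List.Perm.append_right _ List.perm_append_comm

lemma Opt.lo {L} (h : Opt L) : LO L := by
  rintro P A B S rfl
  exact h _ (swap_perm P A B S)

lemma LO.dt {P A B S : List LinFun} (h : LO (P ++ (A ++ (B ++ S)))) (hS : ∀ g ∈ S, 0 < g.a) :
    0 ≤ dt (compList A) (compList B) := by
  have h1 := h P A B S rfl
  have h2 := swap_eq P A B S
  have h3 := al_pos S hS
  by_contra h4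
  nlinarith

lemma LO.dt' {L : List LinFun} (h : LO L) (P A B S : List LinFun) (e : L = P ++ (A ++ (B ++ S)))
    (hS : ∀ g ∈ S, 0 < g.a) :
    0 ≤ LocOpt.dt (compList A) (compList B) := by
  subst e; exact h.dt hS

lemma Opt.swap {P A B S : List LinFun} (h : Opt (P ++ (A ++ (B ++ S))))
    (hd : LocOpt.dt (compList A) (compList B) = 0) :
    Opt (P ++ (B ++ (A ++ S))) ∧ be (P ++ (B ++ (A ++ S))) = be (P ++ (A ++ (B ++ S))) := by
  have h2 := swap_eq P A B S
  rw [hd, mul_zero] at h2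
  have h3 : be (P ++ (B ++ (A ++ S))) = be (P ++ (A ++ (B ++ S))) := by linarith
  refine ⟨fun L' hL' => ?_, h3⟩
  rw [h3]
  exact h _ (hL'.trans (swap_perm P A B S))

lemma exists_opt (L : List LinFun) : ∃ L', L'.Perm L ∧ Opt L' := by
  classical
  obtain ⟨M, hM, h⟩ := Finset.exists_min_image L.permutations.toFinset be
    ⟨L, by simp⟩
  simp only [List.mem_toFinset, List.mem_permutations] at hM h
  exact ⟨M, hM, fun L' hL' => h _ (hL'.trans hM)⟩

/-- no element strictly inside the sector of two consecutive elements -/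
lemma noSector {P S : List LinFun} {x y k : LinFun} (h : LO (P ++ x :: y :: S))
    (hx : 0 ≤ x.a) (hy : 0 < y.a) (hS : ∀ g ∈ S, 0 < g.a) (hk : k ∈ P ∨ k ∈ S)
    (hxy : 0 < dt x y) (hxk : 0 < dt x k) (hky : 0 < dt k y) : False := by
  rcases hk with hk | hk
  · obtain ⟨P1, P2, rfl⟩ := List.append_of_mem hk
    have yS : ∀ g ∈ y :: S, 0 < g.a := by simpa [hy] using hS
    have h1 := h.dt' P1 [k] (P2 ++ [x]) (y :: S) (by simp) yS
    have h2 := h.dt' (P1 ++ [k]) P2 [x] (y :: S) (by simp) yS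
    have h3 := h.dt' (P1 ++ [k]) (P2 ++ [x]) [y] S (by simp) hS
    have h4 := h.dt' (P1 ++ [k]) P2 ([x] ++ [y]) S (by simp) hS
    simp only [dt_append_left, dt_append_right, comp_single, al] at h1 h2 h3 h4
    generalize compList P2 = p at *
    have e : dt k x < 0 := by rw [dt_swap]; linarith
    rcases hx.eq_or_lt with h0 | h0
    · rw [← h0] at h1; linarith
    have key : (x.a * dt k p + dt k x) * dt x y =
        (x.a * dt p y + dt x y) * dt k x + (x.a * dt x p) * dt k y := by
      simp only [dt]; ring
    have e2 : dt x p = - dt p x := dt_swap _ _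
    have a1 : 0 ≤ (x.a * dt k p + dt k x) * dt x y := mul_nonneg h1 hxy.le
    have a2 : (x.a * dt p y + dt x y) * dt k x ≤ 0 := mul_nonpos_of_nonneg_of_nonpos h3 e.le
    have a3 : (x.a * dt x p) * dt k y ≤ 0 :=
      mul_nonpos_of_nonpos_of_nonneg (mul_nonpos_of_nonneg_of_nonpos hx (by linarith)) hky.le
    have b1 : (x.a * dt p y + dt x y) * dt k x = 0 := by linarith
    have b2 : (x.a * dt x p) * dt k y = 0 := by linarith
    have c1 : x.a * dt p y + dt x y = 0 := (mul_eq_zero.1 b1).resolve_right e.ne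
    have c2 : dt x p = 0 :=
      (mul_eq_zero.1 ((mul_eq_zero.1 b2).resolve_right hky.ne')).resolve_left h0.ne'
    have c3 : dt p x = 0 := by linarith
    rw [c3] at h4
    have : 0 ≤ x.a * dt p y := mul_nonneg hx (by linarith)
    linarith
  · obtain ⟨Q, R, rfl⟩ := List.append_of_mem hk
    have hR : ∀ g ∈ R, 0 < g.a := fun g hg => hS g (by simp [hg])
    have hkR : ∀ g ∈ k :: R, 0 < g.a := fun g hg => hS g (by simp at hg ⊢; tauto)
    have hQ : 0 < al Q := al_pos Q fun g hg => hS g (by simp [hg])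
    have h1 := h.dt' (P ++ [x]) ([y] ++ Q) [k] R (by simp) hR
    have h2 := h.dt' (P ++ [x]) [y] Q (k :: R) (by simp) hkR
    have h3 := h.dt' P [x] ([y] ++ Q) (k :: R) (by simp) hkR
    have h4 := h.dt' P ([x] ++ [y]) Q (k :: R) (by simp) hkR
    simp only [dt_append_left, dt_append_right, comp_single, al] at h1 h2 h3 h4 hQ
    generalize compList Q = q at *
    have e : dt y k < 0 := by rw [dt_swap]; linarith
    have key : (q.a * dt y k + dt q k) * dt x y =
        dt q y * dt x k + (q.a * dt x y + dt x q) * dt y k := by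
      simp only [dt]; ring
    have e2 : dt q y = - dt y q := dt_swap _ _
    have a1 : 0 ≤ (q.a * dt y k + dt q k) * dt x y := mul_nonneg h1 hxy.le
    have a2 : (q.a * dt x y + dt x q) * dt y k ≤ 0 := mul_nonpos_of_nonneg_of_nonpos h3 e.le
    have a3 : dt q y * dt x k ≤ 0 :=
      mul_nonpos_of_nonpos_of_nonneg (by linarith) hxk.le
    have b1 : (q.a * dt x y + dt x q) * dt y k = 0 := by linarith
    have b2 : dt q y * dt x k = 0 := by linarith
    have c1 : q.a * dt x y + dt x q = 0 := (mul_eq_zero.1 b1).resolve_right e.ne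
    have c2 : dt q y = 0 := (mul_eq_zero.1 b2).resolve_right hxk.ne'
    have c3 : dt y q = 0 := by linarith
    rw [c3] at h4
    have : 0 < q.a * dt x y := mul_pos hQ hxy
    have : y.a * dt x q < 0 := mul_neg_of_pos_of_neg hy (by linarith)
    linarith

/-- the claim for lists shorter than `n` -/
def IH (n : ℕ) : Prop := ∀ L : List LinFun, L.length < n → (∀ g ∈ L, 0 ≤ g.a) → LO L →
  ∀ L', L'.Perm L → be L ≤ be L'

lemma comp_merge (P S : List LinFun) (x y : LinFun) :
    compList (P ++ y.comp x :: S) = compList (P ++ x :: y :: S) := by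
  simp only [comp_append, comp_cons, LinFun.comp, LinFun.mk.injEq]
  constructor <;> ring

/-- splitting a list with a merged element -/
lemma merge_split {P S U V : List LinFun} {x y z : LinFun} (h : P ++ z :: S = U ++ V) :
    ∃ U' V', P ++ x :: y :: S = U' ++ V' ∧
      ((U' = U ∧ ∃ W, V = W ++ z :: S ∧ V' = W ++ x :: y :: S) ∨
       (V' = V ∧ ∃ W, U = P ++ z :: W ∧ U' = P ++ x :: y :: W)) := by
  rw [List.append_eq_append_iff] at h
  rcases h with ⟨a, rfl, h⟩ | ⟨c, rfl, rfl⟩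
  · cases a with
    | nil =>
      simp at h; subst h
      exact ⟨P, x :: y :: S, rfl, Or.inl ⟨by simp, [], by simp, by simp⟩⟩
    | cons t a =>
      simp at h; obtain ⟨rfl, rfl⟩ := h
      exact ⟨P ++ x :: y :: a, V, by simp, Or.inr ⟨rfl, a, rfl, rfl⟩⟩
  · exact ⟨U, c ++ x :: y :: S, by simp, Or.inl ⟨rfl, c, rfl, rfl⟩⟩

lemma LO.merge {P S : List LinFun} {x y : LinFun} (h : LO (P ++ x :: y :: S)) :
    LO (P ++ y.comp x :: S) := by
  intro Q A B R e
  have key : ∀ Q' A' B' R', P ++ x :: y :: S = Q' ++ (A' ++ (B' ++ R')) →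
      compList Q' = compList Q → compList A' = compList A → compList B' = compList B →
      compList R' = compList R →
      be (P ++ y.comp x :: S) ≤ be (Q ++ (B ++ (A ++ R))) := by
    intro Q' A' B' R' e' h1 h2 h3 h4
    have := h Q' A' B' R' e'
    simp only [be, comp_merge]
    simp only [be, comp_append, h1, h2, h3, h4] at this ⊢
    exact this
  rcases merge_split (x := x) (y := y) e with ⟨U, V, e1, ⟨rfl, W, hW, rfl⟩ | ⟨rfl, W, rfl, rfl⟩⟩
  swap
  · exact key _ _ _ _ e1 (comp_merge _ _ _ _).symm rfl rfl rfl
  rcases merge_split (x := x) (y := y) hW.symm with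
    ⟨U2, V2, e2, ⟨rfl, W2, hW2, rfl⟩ | ⟨rfl, W2, rfl, rfl⟩⟩
  swap
  · exact key _ _ _ _ (by rw [e1, e2]) rfl (comp_merge _ _ _ _).symm rfl rfl
  rcases merge_split (x := x) (y := y) hW2.symm with
    ⟨U3, V3, e3, ⟨rfl, W3, rfl, rfl⟩ | ⟨rfl, W3, rfl, rfl⟩⟩
  · exact key _ _ _ _ (by rw [e1, e2, e3]) rfl rfl rfl (comp_merge _ _ _ _).symm
  · exact key _ _ _ _ (by rw [e1, e2, e3]) rfl rfl (comp_merge _ _ _ _).symm rfl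

lemma share {P S P' S' : List LinFun} {x y : LinFun} (ih : IH (P ++ x :: y :: S).length)
    (hL : ∀ g ∈ P ++ x :: y :: S, 0 ≤ g.a)
    (h : LO (P ++ x :: y :: S)) (hp : (P' ++ x :: y :: S').Perm (P ++ x :: y :: S)) :
    be (P ++ x :: y :: S) ≤ be (P' ++ x :: y :: S') := by
  have h1 := ih (P ++ y.comp x :: S) (by simp) ?_ h.merge (P' ++ y.comp x :: S') ?_
  · simpa only [be, comp_merge] using h1
  · intro g hg
    simp only [List.mem_append, List.mem_cons] at hg
    rcases hg with hg | rfl | hg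
    · exact hL g (by simp [hg])
    · exact mul_nonneg (hL y (by simp)) (hL x (by simp))
    · exact hL g (by simp [hg])
  · have a1 : (x :: y :: (P' ++ S')).Perm (x :: y :: (P ++ S)) := by
      refine List.Perm.trans ?_ (hp.trans ?_)
      · exact (List.perm_middle.trans (List.Perm.cons _ List.perm_middle)).symm
      · exact (List.perm_middle.trans (List.Perm.cons _ List.perm_middle))
    have a2 := a1.cons_inv.cons_inv
    exact List.perm_middle.trans ((a2.cons _).trans List.perm_middle.symm)

/-- bound when all elements move `c` upwards -/
lemma up_bound (c : ℝ) (L : List LinFun) (h : ∀ g ∈ L, 0 ≤ g.a ∧ c ≤ g.a * c + g.b) :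
    c ≤ al L * c + be L := by
  induction L using List.reverseRecOn with
  | nil => simp [al_nil, be_nil]
  | append_singleton L x ih =>
    have h1 := ih fun g hg => h g (by simp [hg])
    obtain ⟨h2, h3⟩ := h x (by simp)
    rw [al_append, be_append]
    simp only [al, be, comp_single] at *
    have := mul_le_mul_of_nonneg_left h1 h2
    linarith

lemma al_zero {L : List LinFun} {x : LinFun} (hx : x ∈ L) (h : x.a = 0) : al L = 0 := by
  obtain ⟨P, S, rfl⟩ := List.append_of_mem hx
  rw [al_append, al_cons, h]; simp

lemma zero_case {P S L' : List LinFun} {x : LinFun} (h : LO (P ++ x :: S)) (hx : x.a = 0)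
    (hg : ∀ g ∈ P ++ x :: S, 0 ≤ g.a ∧ x.b ≤ g.a * x.b + g.b)
    (hp : L'.Perm (P ++ x :: S)) : be (P ++ x :: S) ≤ be L' := by
  have h1 := up_bound x.b L' fun g hg' => hg g (hp.mem_iff.1 hg')
  rw [al_zero (hp.mem_iff.2 (by simp : x ∈ P ++ x :: S)) hx] at h1
  have h2 := h P [x] S [] (by simp)
  simp only [List.append_nil] at h2
  have h3 : be (P ++ (S ++ [x])) = x.b := by
    rw [← List.append_assoc, be_append]; simp [al, be, comp_single, hx]
  linarith

lemma comm_all {L L' : List LinFun} (hp : L'.Perm L) (h : ∀ f ∈ L, ∀ g ∈ L, dt f g = 0) :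
    be L = be L' := by
  have : compList L' = compList L := by
    unfold compList
    refine hp.foldl_eq' ?_ _
    intro f hf g hg z
    have := h f (hp.mem_iff.1 hf) g (hp.mem_iff.1 hg)
    simp only [dt] at this
    simp only [LinFun.comp, LinFun.mk.injEq]
    constructor
    · ring
    · linarith
  simp [be, this]

lemma dt_self (f : LinFun) : dt f f = 0 := by simp only [dt]; ring

lemma share' {P S ρ : List LinFun} {x y : LinFun} (ih : IH (P ++ x :: y :: S).length)
    (hL : ∀ g ∈ P ++ x :: y :: S, 0 ≤ g.a)
    (h : LO (P ++ x :: y :: S)) (hp : ρ.Perm (P ++ x :: y :: S))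
    (hr : ∃ P' S', (P' ++ x :: y :: S').Perm ρ ∧ be (P' ++ x :: y :: S') ≤ be ρ) :
    be (P ++ x :: y :: S) ≤ be ρ := by
  obtain ⟨P', S', h1, h2⟩ := hr
  exact (share ih hL h (h1.trans hp)).trans h2

lemma swap_ex {P A B S : List LinFun} (hd : dt (compList A) (compList B) = 0) :
    be (P ++ (B ++ (A ++ S))) ≤ be (P ++ (A ++ (B ++ S))) := by
  have h2 := swap_eq P A B S
  rw [hd, mul_zero] at h2
  linarith

lemma bring_zero {P' S' : List LinFun} {x y : LinFun} (hx : ∀ g, dt x g = 0)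
    (hy : y ∈ P' ∨ y ∈ S') :
    ∃ P S, (P ++ x :: y :: S).Perm (P' ++ x :: S') ∧
      be (P ++ x :: y :: S) ≤ be (P' ++ x :: S') := by
  have hx' : ∀ g, dt g x = 0 := fun g => by rw [dt_swap, hx]; simp
  rcases hy with hy | hy
  · obtain ⟨P1, P2, rfl⟩ := List.append_of_mem hy
    have h1 := swap_ex (P := P1) (A := y :: P2) (B := [x]) (S := S') (by rw [comp_single, hx'])
    have h2 := swap_perm P1 (y :: P2) [x] S'
    exact ⟨P1, P2 ++ S', by simpa using h2, by simpa using h1⟩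
  · obtain ⟨B, R, rfl⟩ := List.append_of_mem hy
    have h1 := swap_ex (P := P') (A := [x]) (B := B) (S := y :: R) (by rw [comp_single, hx])
    have h2 := swap_perm P' [x] B (y :: R)
    exact ⟨P' ++ B, R, by simpa using h2, by simpa using h1⟩

lemma bring_ray {P' S' : List LinFun} {x y : LinFun} {t : ℝ} (ht : 0 ≤ t)
    (hxy : ∀ g, dt y g = t * dt x g) (h : LO (P' ++ x :: S')) (hx : 0 ≤ x.a)
    (hS : ∀ g ∈ S', 0 < g.a)
    (hy : y ∈ P' ∨ y ∈ S') :
    ∃ P S, (P ++ x :: y :: S).Perm (P' ++ x :: S') ∧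
      be (P ++ x :: y :: S) ≤ be (P' ++ x :: S') := by
  have hyx : ∀ g, dt g y = t * dt g x := fun g => by
    rw [dt_swap, hxy, dt_swap g x]; ring
  rcases hy with hy | hy
  · obtain ⟨P1, P2, rfl⟩ := List.append_of_mem hy
    have a1 := h.dt' P1 [y] (P2 ++ [x]) S' (by simp) hS
    have a2 := h.dt' (P1 ++ [y]) P2 [x] S' (by simp) hS
    have a3 : dt (compList [y]) (compList (P2 ++ [x])) = 0 := by
      apply le_antisymm _ a1
      rw [dt_append_right]
      simp only [comp_single, al, hxy] at *
      rw [dt_self, dt_swap x]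
      have := mul_nonneg hx (mul_nonneg ht a2)
      linarith
    have h1 := swap_ex (P := P1) (S := S') a3
    have h2 := swap_perm P1 [y] (P2 ++ [x]) S'
    exact ⟨P1 ++ P2, S', by simpa using h2, by simpa using h1⟩
  · obtain ⟨B, R, rfl⟩ := List.append_of_mem hy
    have a1 := h.dt' P' [x] B (y :: R) (by simp)
      (fun g hg => hS g (by simp at hg ⊢; tauto))
    have a2 := h.dt' (P' ++ [x]) B [y] R (by simp) (fun g hg => hS g (by simp [hg]))
    have a3 : dt (compList B) (compList [y]) = 0 := by
      apply le_antisymm _ a2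
      simp only [comp_single] at *
      rw [hyx, dt_swap]
      have := mul_nonneg ht a1
      linarith
    have h1 := swap_ex (P := P' ++ [x]) (S := R) a3
    have h2 := swap_perm (P' ++ [x]) B [y] R
    exact ⟨P', B ++ R, by simpa using h2, by simpa using h1⟩

lemma bring_next {P' S' : List LinFun} {x y w : LinFun} {t : ℝ} (ht : 0 ≤ t)
    (hxy : ∀ g, dt y g = t * dt w g) (h : LO (P' ++ x :: w :: S'))
    (hS : ∀ g ∈ w :: S', 0 < g.a)
    (hy : y ∈ P' ∨ y ∈ S') :
    ∃ P S, (P ++ x :: y :: S).Perm (P' ++ x :: w :: S') ∧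
      be (P ++ x :: y :: S) ≤ be (P' ++ x :: w :: S') := by
  have hyx : ∀ g, dt g y = t * dt g w := fun g => by
    rw [dt_swap, hxy, dt_swap g w]; ring
  rcases hy with hy | hy
  · obtain ⟨P1, P2, rfl⟩ := List.append_of_mem hy
    have a1 := h.dt' P1 [y] (P2 ++ [x]) (w :: S') (by simp) hS
    have a2 := h.dt' (P1 ++ [y]) (P2 ++ [x]) [w] S' (by simp)
      (fun g hg => hS g (by simp [hg]))
    have a3 : dt (compList [y]) (compList (P2 ++ [x])) = 0 := by
      apply le_antisymm _ a1
      simp only [comp_single, hxy] at *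
      rw [dt_swap]
      have := (mul_nonneg ht a2)
      linarith
    have h1 := swap_ex (P := P1) (S := w :: S') a3
    have h2 := swap_perm P1 [y] (P2 ++ [x]) (w :: S')
    exact ⟨P1 ++ P2, w :: S', by simpa using h2, by simpa using h1⟩
  · obtain ⟨B, R, rfl⟩ := List.append_of_mem hy
    have a1 := h.dt' (P' ++ [x]) [w] B (y :: R) (by simp)
      (fun g hg => hS g (by simp at hg ⊢; tauto))
    have a2 := h.dt' (P' ++ [x] ++ [w]) B [y] R (by simp) (fun g hg => hS g (by simp [hg]))
    have a3 : dt (compList ([w] ++ B)) (compList [y]) = 0 := by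
      rw [dt_append_left]
      simp only [comp_single] at *
      have e : dt (compList B) y = 0 := by
        apply le_antisymm _ a2
        rw [hyx, dt_swap]
        have := mul_nonneg ht a1
        linarith
      rw [e, hyx, dt_self]; ring
    have h1 := swap_ex (P := P' ++ [x]) (S := R) a3
    have h2 := swap_perm (P' ++ [x]) ([w] ++ B) [y] R
    exact ⟨P', w :: (B ++ R), by simpa using h2, by simpa using h1⟩

lemma ray_of {x y w : LinFun} (h1 : 0 < dt x y) (h2 : 0 < dt x w) (h3 : dt y w = 0) :
    ∃ t : ℝ, 0 ≤ t ∧ ∀ g, dt y g = t * dt w g := by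
  refine ⟨dt x y / dt x w, (div_pos h1 h2).le, fun g => ?_⟩
  have : dt x w * dt y g = dt x y * dt w g + dt x g * dt y w := by
    simp only [dt]; ring
  rw [h3] at this
  field_simp
  linarith

lemma ray_of' {x y : LinFun} (h : dt x y = 0) (hx : x.b ≠ 0 ∨ 1 - x.a ≠ 0) :
    ∃ t : ℝ, ∀ g, dt y g = t * dt x g := by
  simp only [dt] at h
  rcases hx with hx | hx
  · refine ⟨y.b / x.b, fun g => ?_⟩
    simp only [dt]
    field_simp
    linear_combination (-g.b) * h
  · refine ⟨(1 - y.a) / (1 - x.a), fun g => ?_⟩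
    simp only [dt]
    field_simp
    linear_combination (-(1 - g.a)) * h

lemma opp {P S : List LinFun} {x y : LinFun} {t : ℝ} (ht : t < 0)
    (hxy : ∀ g, dt y g = t * dt x g) (h : LO (P ++ x :: y :: S))
    (hS : ∀ g ∈ S, 0 < g.a) : ∀ k ∈ S, dt x k = 0 := by
  have e : dt x y = 0 := by rw [dt_swap, hxy, dt_self]; ring
  have key : ∀ S1 S2, S = S1 ++ S2 → dt x (compList S1) = 0 := by
    rintro S1 S2 rfl
    have h2 : ∀ g ∈ S2, 0 < g.a := fun g hg => hS g (by simp [hg])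
    have a1 := h.dt' (P ++ [x]) [y] S1 S2 (by simp) h2
    have a2 := h.dt' P [x] ([y] ++ S1) S2 (by simp) h2
    rw [dt_append_right] at a2
    simp only [comp_single, hxy, e] at a1 a2
    nlinarith
  intro k hk
  obtain ⟨S1, S2, rfl⟩ := List.append_of_mem hk
  have b1 := key S1 (k :: S2) rfl
  have b2 := key (S1 ++ [k]) S2 (by simp)
  rw [dt_append_right, b1, comp_single] at b2
  linarith

lemma core {P S0 : List LinFun} {x : LinFun} (ih : IH (P ++ x :: S0).length)
    (hL : ∀ g ∈ P ++ x :: S0, 0 ≤ g.a) (h : LO (P ++ x :: S0))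
    (hS : ∀ g ∈ S0, 0 < g.a) (hc : (P = [] ∧ 0 < x.a) ∨ x.a = 0) :
    ∀ (m : ℕ) (P' S' : List LinFun), S'.length = m → Opt (P' ++ x :: S') →
      (P' ++ x :: S').Perm (P ++ x :: S0) → (∀ g ∈ S', 0 < g.a) →
      be (P ++ x :: S0) ≤ be (P' ++ x :: S') := by
  intro m
  have hx : 0 ≤ x.a := hL x (by simp)
  have hPz : x.a = 0 → ∀ g ∈ P, 0 ≤ g.a ∧ x.b ≤ g.a * x.b + g.b := by
    intro h0 g hg
    refine ⟨hL g (by simp [hg]), ?_⟩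
    obtain ⟨P1, P2, rfl⟩ := List.append_of_mem hg
    have := h.dt' P1 [g] (P2 ++ [x]) S0 (by simp) hS
    rw [dt_append_right] at this
    simp only [comp_single, al, h0, dt] at this
    linarith
  induction m with
  | zero =>
    intro P' S' hl ho hp hS'
    obtain rfl := List.length_eq_zero_iff.1 hl
    have h2 := h P [x] S0 [] (by simp)
    simp only [List.append_nil] at h2
    have h3 : be (P ++ (S0 ++ [x])) = x.a * be (P ++ S0) + x.b := by
      rw [← List.append_assoc, be_append]; simp [al, be, comp_single]
    have h4 : be (P' ++ [x]) = x.a * be P' + x.b := by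
      rw [be_append]; simp [al, be, comp_single]
    rcases hc with ⟨rfl, h0⟩ | h0
    · have h5 := ih S0 (by simp) (fun g hg => hL g (by simp [hg])) ?_ P' ?_
      · have := mul_le_mul_of_nonneg_left h5 hx
        try simp only [List.nil_append] at h2 h3 ⊢
        linarith
      · rintro Q A B R rfl
        have := h (x :: Q) A B R (by simp)
        rw [List.nil_append, List.cons_append, be_cons, be_cons] at this
        simp only [al_append] at this
        have e2 : (al R * al B * al A * al Q) = (al R * al A * al B * al Q) := by ring
        rw [e2] at this
        linarith
      · have := List.perm_middle.symm.trans (hp)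
        simpa using this
    · rw [h4, h0]; rw [h3, h0] at h2; linarith
  | succ m ihm =>
    intro P' S' hl ho hp hS'
    cases S0 with
    | nil =>
      rcases hc with ⟨rfl, h0⟩ | h0
      · have := hp.length_eq
        simp only [List.length_append, List.length_cons, List.length_nil] at this
        omega
      · refine zero_case h h0 ?_ hp
        intro g hg
        simp only [List.mem_append, List.mem_cons, List.not_mem_nil, or_false] at hg
        rcases hg with hg | rfl
        · exact hPz h0 g hg
        · simp [h0]
    | cons y S =>
      have hSS : ∀ g ∈ S, 0 < g.a := fun g hg => hS g (by simp [hg])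
      have hya : 0 < y.a := hS y (by simp)
      have hpp : (P' ++ S').Perm (P ++ y :: S) :=
        (List.perm_middle.symm.trans (hp.trans List.perm_middle)).cons_inv
      have hymem : y ∈ P' ∨ y ∈ S' := by
        have : y ∈ P' ++ S' := hpp.mem_iff.2 (by simp)
        simpa using this
      have hxy := h.dt' P [x] [y] S (by simp) hSS
      simp only [comp_single] at hxy
      rcases hxy.eq_or_lt with hxy | hxy
      · by_cases hx0 : x.b ≠ 0 ∨ 1 - x.a ≠ 0
        · obtain ⟨t, ht⟩ := ray_of' hxy.symm hx0
          rcases le_or_gt 0 t with ht0 | ht0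
          · exact share' ih hL h hp (bring_ray ht0 ht ho.lo hx hS' hymem)
          · have hk := opp ht0 ht h hSS
            rcases hc with ⟨rfl, h0⟩ | h0
            · have hall : ∀ g ∈ [] ++ x :: y :: S, dt x g = 0 := by
                intro g hg
                simp only [List.nil_append, List.mem_cons] at hg
                rcases hg with rfl | rfl | hg
                · exact dt_self _
                · exact hxy.symm
                · exact hk g hg
              refine (comm_all hp ?_).le
              intro f hf g hg
              obtain ⟨s, hs⟩ := ray_of' (hall f hf) hx0
              rw [hs, hall g hg, mul_zero]
            · refine zero_case h h0 ?_ hp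
              intro g hg
              have hz : dt x g = 0 → x.b ≤ g.a * x.b + g.b := by
                intro hz; simp only [dt, h0] at hz; linarith
              refine ⟨hL g hg, ?_⟩
              simp only [List.mem_append, List.mem_cons] at hg
              rcases hg with hg | rfl | rfl | hg
              · exact (hPz h0 g hg).2
              · simp [h0]
              · exact hz hxy.symm
              · exact hz (hk g hg)
        · push Not at hx0
          refine share' ih hL h hp (bring_zero ?_ hymem)
          intro g; simp [dt, hx0.1, hx0.2]
      · cases S' with
        | nil => simp at hl
        | cons w S' =>
          have hS2 : ∀ g ∈ S', 0 < g.a := fun g hg => hS' g (by simp [hg])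
          have hxw := ho.lo.dt' P' [x] [w] S' (by simp) hS2
          rcases hxw.eq_or_lt with hxw | hxw
          · have e := Opt.swap (P := P') (A := [x]) (B := [w]) (S := S') (by simpa using ho) hxw.symm
            have e2 := swap_perm P' [x] [w] S'
            have := ihm (P' ++ [w]) S' (by simpa using hl) (by simpa using e.1)
              (by simpa using e2.trans (by simpa using hp)) hS2
            refine this.trans (le_of_eq ?_)
            simpa using e.2
          · simp only [comp_single] at hxw
            by_cases hyw : y = w
            · subst hyw
              exact share' ih hL h hp ⟨P', S', List.Perm.refl _, le_rfl⟩
            have hym : y ∈ P' ∨ y ∈ S' := by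
              simp only [List.mem_cons] at hymem; tauto
            have hwm : w ∈ P ∨ w ∈ S := by
              have : w ∈ P ++ y :: S := hpp.mem_iff.1 (by simp)
              simp only [List.mem_append, List.mem_cons] at this
              rcases this with h | h | h
              · exact Or.inl h
              · exact absurd h.symm hyw
              · exact Or.inr h
            have n1 : ¬ 0 < dt w y := fun hlt => noSector h hx hya hSS hwm hxy hxw hlt
            have n2 : ¬ 0 < dt y w := fun hlt =>
              noSector ho.lo hx (hS' w (by simp)) hS2 hym hxw hxy hlt
            have n3 : dt y w = 0 := by
              rw [dt_swap] at n1
              linarith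
            obtain ⟨t, ht, hyt⟩ := ray_of hxy hxw n3
            exact share' ih hL h hp (bring_next ht hyt ho.lo hS' hym)

/-- last element with zero slope -/
lemma last_zero (L : List LinFun) (hL : ∀ g ∈ L, 0 ≤ g.a) :
    (∀ g ∈ L, 0 < g.a) ∨ ∃ P x S, L = P ++ x :: S ∧ x.a = 0 ∧ ∀ g ∈ S, 0 < g.a := by
  induction L with
  | nil => left; simp
  | cons x L ih =>
    rcases ih (fun g hg => hL g (by simp [hg])) with h | ⟨P, z, S, rfl, h1, h2⟩
    · rcases (hL x (by simp)).eq_or_lt with h0 | h0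
      · exact Or.inr ⟨[], x, L, rfl, h0.symm, h⟩
      · left; simpa [h0] using h
    · exact Or.inr ⟨x :: P, z, S, rfl, h1, h2⟩

lemma main_list (n : ℕ) : IH n := by
  induction n with
  | zero => intro L hl; simp at hl
  | succ n ihn =>
    intro L hl hL h L' hL'
    have ih : IH L.length := fun M hM => ihn M (by omega)
    obtain ⟨ρ, hρ, ho⟩ := exists_opt L
    suffices be L ≤ be ρ from this.trans (ho _ (hL'.trans hρ.symm))
    rcases last_zero L hL with hpos | ⟨P, x, S, rfl, hx, hS⟩
    · cases L with
      | nil => simp at hρ; subst hρ; rfl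
      | cons x S =>
        obtain ⟨P', S', rfl⟩ := List.append_of_mem (hρ.mem_iff.2 (by simp : x ∈ x :: S))
        exact core (P := []) ih hL h (fun g hg => hpos g (by simp [hg]))
          (Or.inl ⟨rfl, hpos x (by simp)⟩) _ P' S' rfl ho hρ
          (fun g hg => hpos g (hρ.mem_iff.1 (by simp [hg])))
    · have hc := core ih hL h hS (Or.inr hx)
      have hL2 : ∀ g ∈ ρ, 0 ≤ g.a := fun g hg => hL g (hρ.mem_iff.1 hg)
      have hxρ : x ∈ ρ := hρ.mem_iff.2 (by simp)
      rcases last_zero ρ hL2 with hpos | ⟨P', z, S', rfl, hz, hS'⟩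
      · have := hpos x hxρ; linarith
      · by_cases hzx : z = x
        · subst hzx; exact hc _ P' S' rfl ho hρ hS'
        have hxP : x ∈ P' := by
          simp only [List.mem_append, List.mem_cons] at hxρ
          rcases hxρ with h | h | h
          · exact h
          · exact absurd h.symm hzx
          · have := hS' x h; linarith
        have hzP : z ∈ P := by
          have : z ∈ P ++ x :: S := hρ.mem_iff.1 (by simp)
          simp only [List.mem_append, List.mem_cons] at this
          rcases this with h | h | h
          · exact h
          · exact absurd h hzx
          · have := hS z h; linarith
        have hle : x.b ≤ z.b := by
          obtain ⟨P1, P2, rfl⟩ := List.append_of_mem hzP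
          have := h.dt' P1 [z] (P2 ++ [x]) S (by simp) hS
          rw [dt_append_right] at this
          simp only [comp_single, al, hx, dt, hz] at this
          linarith
        obtain ⟨P1, P2, rfl⟩ := List.append_of_mem hxP
        have hperm : (P1 ++ z :: P2 ++ x :: S').Perm (P1 ++ x :: P2 ++ z :: S') := by
          simp only [List.append_assoc, List.cons_append]
          apply List.Perm.append_left
          refine List.Perm.trans (List.Perm.cons z List.perm_middle) ?_
          refine List.Perm.trans (List.Perm.swap _ _ _) ?_
          exact List.Perm.cons x List.perm_middle.symm
        have hbe : be (P1 ++ z :: P2 ++ x :: S') ≤ be (P1 ++ x :: P2 ++ z :: S') := by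
          rw [be_append, be_append (P1 ++ x :: P2), be_cons, be_cons, al_cons, al_cons, hx, hz]
          have := mul_le_mul_of_nonneg_left hle (al_pos S' hS').le
          linarith
        refine (hc _ (P1 ++ z :: P2) S' rfl ?_ (hperm.trans hρ) hS').trans hbe
        intro M hM
        exact hbe.trans (ho M (hM.trans hperm))

/-- index map of a block swap -/
def bl (l a b i : ℕ) : ℕ :=
  if i < l then i else if i < l + b then i + a else if i < l + a + b then i - b else i

lemma bl_lt {l a b n i : ℕ} (h : l + a + b ≤ n) (hi : i < n) : bl l a b i < n := by
  unfold bl; split_ifs <;> omega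

lemma bl_inj {l a b i j : ℕ} (h : bl l a b i = bl l a b j) : i = j := by
  unfold bl at h; split_ifs at h <;> omega

lemma lo_of {n : ℕ} (f : Fin n → LinFun) (σ : Equiv.Perm (Fin n)) (h : LocallyOptimal f σ) :
    LO (permList f σ) := by
  intro P A B S e
  rcases A.eq_nil_or_concat with rfl | ⟨A', a', hA⟩
  · rw [e]; simp
  rcases B.eq_nil_or_concat with rfl | ⟨B', b', hB⟩
  · rw [e]; simp
  have hA1 : 0 < A.length := by rw [hA]; simp
  have hB1 : 0 < B.length := by rw [hB]; simp
  have hn : n = P.length + A.length + B.length + S.length := by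
    have := congrArg List.length e
    simp [permList] at this; omega
  let τ0 : Fin n → Fin n := fun i => ⟨bl P.length A.length B.length i, bl_lt (by omega) i.2⟩
  have hτ0 : Function.Injective τ0 := by
    intro i j hij
    simp only [τ0, Fin.mk.injEq] at hij
    exact Fin.ext (bl_inj hij)
  let τ : Equiv.Perm (Fin n) := Equiv.ofBijective τ0 (Finite.injective_iff_bijective.1 hτ0)
  have hτ : ∀ i, τ i = τ0 i := fun i => rfl
  have h1 := h (τ.trans σ) ?_
  · have e2 : permList f (τ.trans σ) = P ++ (B ++ (A ++ S)) := by
      apply List.ext_getElem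
      · simp [permList]; omega
      · intro i hi1 hi2
        have hi : i < n := by simpa [permList] using hi1
        have g : ∀ j (hj : j < n), f (σ ⟨j, hj⟩) =
            (P ++ (A ++ (B ++ S)))[j]'(by simp; omega) := by
          intro j hj
          simp only [← e]
          simp [permList]
        simp only [permList, List.getElem_ofFn, Equiv.trans_apply, hτ, τ0]
        rw [g _ (bl_lt (by omega) hi)]
        simp only [List.getElem_append, bl]
        grind
    have h3 := h1
    unfold permComp at h3
    rw [e2] at h3
    exact h3
  · refine ⟨P.length, P.length + A.length - 1, P.length + A.length + B.length - 1,
      by omega, by omega, by omega, ?_, ?_, ?_⟩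
    · intro i hi
      rw [Equiv.trans_apply, hτ]
      congr 1
      apply Fin.ext
      simp only [τ0, bl]
      split_ifs <;> omega
    · intro i hi1 hi2
      rw [Equiv.trans_apply, hτ]
      congr 1
      apply Fin.ext
      simp only [τ0, bl]
      split_ifs <;> omega
    · intro i hi1 hi2
      rw [Equiv.trans_apply, hτ]
      congr 1
      apply Fin.ext
      simp only [τ0, bl]
      split_ifs <;> omega

lemma permList_perm {n : ℕ} (f : Fin n → LinFun) (σ : Equiv.Perm (Fin n)) :
    (permList f σ).Perm (List.ofFn f) := Equiv.Perm.ofFn_comp_perm σ f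

end LocOpt

/-- global optimality is equivalent to local optimality for monotone
nondecreasing linear functions. -/
theorem stmt17 {n : ℕ} (f : Fin n → LinFun) (hf : ∀ i, 0 ≤ (f i).a)
    (σ : Equiv.Perm (Fin n)) :
    IsMinimum f σ ↔ LocallyOptimal f σ := by
  constructor
  · intro h μ _
    exact h μ
  · intro h ρ
    refine LocOpt.main_list (n + 1) (permList f σ) (by simp [permList]) ?_ (LocOpt.lo_of f σ h)
      (permList f ρ) ((LocOpt.permList_perm f ρ).trans (LocOpt.permList_perm f σ).symm)
    intro g hg
    obtain ⟨i, rfl⟩ := (List.mem_ofFn' _ _).1 hg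
    exact hf _
end
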